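/- arXiv:1606.00272 — 4 statements merged into one kernel-verified Lean document; each statement's English description precedes it below -/
import Mathlib

section
/- Let R be a commutative ring, I an ideal of R, and n ≥ 4. Then in St*(n,R,I), for every M ∈ E(n,R), r ∈ R and a ∈ I, the relation F(Me₁·r + Me₂, M*e₃·a) = F(Me₁, M*e₃·ar)·F(Me₂, M*e₃·a) holds, where M* = (Mᵗ)⁻¹. -/
/-- The set of elementary transvections inside `GL n R`. -/
def transvectionSet (n : ℕ) (R : Type) [CommRing R] :
    Set (Matrix.GeneralLinearGroup (Fin n) R) :=
  {M | ∃ (i j : Fin n) (_ : i ≠ j) (r : R),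
    (M : Matrix (Fin n) (Fin n) R) = 1 + Matrix.single i j r}

/-- The elementary subgroup `E(n, R) ≤ GL(n, R)`. -/
def Elem (n : ℕ) (R : Type) [CommRing R] : Subgroup (Matrix.GeneralLinearGroup (Fin n) R) :=
  Subgroup.closure (transvectionSet n R)

/-- The set `E(n,R)e₁` of first columns of elementary matrices. -/
def Ecol (n : ℕ) (R : Type) [CommRing R] [NeZero n] : Set (Fin n → R) :=
  {u | ∃ M ∈ Elem n R, u = fun i => (M : Matrix (Fin n) (Fin n) R) i 0}

/-- The matrix `t(u, v) = 1 + u·vᵗ`. -/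
def tMat {n : ℕ} {R : Type} [CommRing R] (u v : Fin n → R) : Matrix (Fin n) (Fin n) R :=
  1 + Matrix.vecMulVec u v

/-- The `k`-th column of an invertible matrix. -/
def colM {n : ℕ} {R : Type} [CommRing R] (M : Matrix.GeneralLinearGroup (Fin n) R)
    (k : Fin n) : Fin n → R :=
  fun i => (M : Matrix (Fin n) (Fin n) R) i k

/-- The `k`-th column of the contragredient matrix `M* = (Mᵗ)⁻¹ = (M⁻¹)ᵗ`. -/
def starCol {n : ℕ} {R : Type} [CommRing R] (M : Matrix.GeneralLinearGroup (Fin n) R)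
    (k : Fin n) : Fin n → R :=
  fun i => ((M⁻¹ : Matrix.GeneralLinearGroup (Fin n) R) : Matrix (Fin n) (Fin n) R) k i

/-- Unimodularity of the `n × 2` matrix with columns `u`, `w`: it admits a left inverse. -/
def Unimodular2 {n : ℕ} {R : Type} [CommRing R] (u w : Fin n → R) : Prop :=
  ∃ x y : Fin n → R,
    dotProduct x u = 1 ∧ dotProduct x w = 0 ∧
    dotProduct y u = 0 ∧ dotProduct y w = 1
/-- Generators `F(u,v)` and `S(u,v)` of the group `St*(n, R, I)`. -/
inductive StarGen (n : ℕ) (R : Type) [CommRing R] [NeZero n] (I : Ideal R) : Type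
  | F (u v : Fin n → R) (hu : u ∈ Ecol n R) (hv : ∀ i, v i ∈ I)
      (ho : dotProduct u v = 0) : StarGen n R I
  | S (u v : Fin n → R) (hu : ∀ i, u i ∈ I) (hv : v ∈ Ecol n R)
      (ho : dotProduct u v = 0) : StarGen n R I

/-- The relations (R1)–(R4) of the group `St*(n, R, I)`. -/
inductive StarRels (n : ℕ) (R : Type) [CommRing R] [NeZero n] (I : Ideal R) :
    FreeGroup (StarGen n R I) → Prop
  | addF (u v w : Fin n → R) (hu : u ∈ Ecol n R) (hv : ∀ i, v i ∈ I) (hw : ∀ i, w i ∈ I)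
      (hvw : ∀ i, (v + w) i ∈ I) (o1 : dotProduct u v = 0)
      (o2 : dotProduct u w = 0) (o3 : dotProduct u (v + w) = 0) :
      StarRels n R I ((FreeGroup.of (StarGen.F u v hu hv o1) : FreeGroup (StarGen n R I)) *
        FreeGroup.of (StarGen.F u w hu hw o2) * (FreeGroup.of (StarGen.F u (v + w) hu hvw o3))⁻¹)
  | addS (u w v : Fin n → R) (hu : ∀ i, u i ∈ I) (hw : ∀ i, w i ∈ I)
      (huw : ∀ i, (u + w) i ∈ I) (hv : v ∈ Ecol n R) (o1 : dotProduct u v = 0)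
      (o2 : dotProduct w v = 0) (o3 : dotProduct (u + w) v = 0) :
      StarRels n R I ((FreeGroup.of (StarGen.S u v hu hv o1) : FreeGroup (StarGen n R I)) *
        FreeGroup.of (StarGen.S w v hw hv o2) * (FreeGroup.of (StarGen.S (u + w) v huw hv o3))⁻¹)
  | conjF (u v u' v' : Fin n → R) (hu : u ∈ Ecol n R) (hv : ∀ i, v i ∈ I)
      (o1 : dotProduct u v = 0) (hu' : u' ∈ Ecol n R) (hv' : ∀ i, v' i ∈ I)
      (o2 : dotProduct u' v' = 0)
      (hu'' : Matrix.mulVec (tMat u v) u' ∈ Ecol n R)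
      (hv'' : ∀ i, Matrix.mulVec (1 - Matrix.vecMulVec v u) v' i ∈ I)
      (o3 : dotProduct (Matrix.mulVec (tMat u v) u')
        (Matrix.mulVec (1 - Matrix.vecMulVec v u) v') = 0) :
      StarRels n R I ((FreeGroup.of (StarGen.F u v hu hv o1) : FreeGroup (StarGen n R I)) *
        FreeGroup.of (StarGen.F u' v' hu' hv' o2) * (FreeGroup.of (StarGen.F u v hu hv o1))⁻¹ *
        (FreeGroup.of (StarGen.F (Matrix.mulVec (tMat u v) u')
          (Matrix.mulVec (1 - Matrix.vecMulVec v u) v') hu'' hv'' o3))⁻¹)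
  | coinc (M : Matrix.GeneralLinearGroup (Fin n) R) (hM : M ∈ Elem n R) (a : R) (ha : a ∈ I)
      (h1 : colM M 0 ∈ Ecol n R) (h2 : ∀ i, (a • starCol M 1) i ∈ I)
      (h3 : dotProduct (colM M 0) (a • starCol M 1) = 0)
      (h4 : ∀ i, (a • colM M 0) i ∈ I) (h5 : starCol M 1 ∈ Ecol n R)
      (h6 : dotProduct (a • colM M 0) (starCol M 1) = 0) :
      StarRels n R I ((FreeGroup.of (StarGen.F (colM M 0) (a • starCol M 1) h1 h2 h3) :
          FreeGroup (StarGen n R I)) *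
        (FreeGroup.of (StarGen.S (a • colM M 0) (starCol M 1) h4 h5 h6))⁻¹)

/-- The group `St*(n, R, I)`. -/
abbrev StStar (n : ℕ) (R : Type) [CommRing R] [NeZero n] (I : Ideal R) : Type :=
  PresentedGroup {w | StarRels n R I w}

section Helpers

variable {n : ℕ} {R : Type} [CommRing R]

/-- Transvection as an element of GL. -/
def tGL (i j : Fin n) (h : i ≠ j) (r : R) : Matrix.GeneralLinearGroup (Fin n) R :=
  ⟨Matrix.transvection i j r, Matrix.transvection i j (-r),
    by rw [Matrix.transvection_mul_transvection_same _ _ h]; simp,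
    by rw [Matrix.transvection_mul_transvection_same _ _ h]; simp⟩

lemma tGL_inv (i j : Fin n) (h : i ≠ j) (r : R) : (tGL i j h r)⁻¹ = tGL i j h (-r) := by
  apply Units.ext
  rfl

lemma tGL_mem (i j : Fin n) (h : i ≠ j) (r : R) : tGL i j h r ∈ Elem n R :=
  Subgroup.subset_closure ⟨i, j, h, r, rfl⟩

lemma colM_mul (M : Matrix.GeneralLinearGroup (Fin n) R) (i j : Fin n) (h : i ≠ j) (r : R)
    (k : Fin n) :
    colM (M * tGL i j h r) k = colM M k + if k = j then r • colM M i else 0 := by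
  funext l
  by_cases hk : k = j
  · subst hk
    have := Matrix.mul_transvection_apply_same i k l r (M : Matrix (Fin n) (Fin n) R)
    simpa [colM, tGL] using this
  · have := Matrix.mul_transvection_apply_of_ne i j l k hk r (M : Matrix (Fin n) (Fin n) R)
    simpa [colM, tGL, hk] using this

lemma starCol_mul (M : Matrix.GeneralLinearGroup (Fin n) R) (i j : Fin n) (h : i ≠ j) (r : R)
    (k : Fin n) :
    starCol (M * tGL i j h r) k = starCol M k + if k = i then (-r) • starCol M j else 0 := by
  funext l
  unfold starCol
  rw [mul_inv_rev, tGL_inv]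
  by_cases hk : k = i
  · subst hk
    have := Matrix.transvection_mul_apply_same k j l (-r)
      ((M⁻¹ : Matrix.GeneralLinearGroup (Fin n) R) : Matrix (Fin n) (Fin n) R)
    simp only [if_true]
    exact this
  · have := Matrix.transvection_mul_apply_of_ne i j k l hk (-r)
      ((M⁻¹ : Matrix.GeneralLinearGroup (Fin n) R) : Matrix (Fin n) (Fin n) R)
    simp only [hk, if_false, add_zero]
    exact this

/-- Weyl element. -/
def wGL (R : Type) [CommRing R] (i j : Fin n) (h : i ≠ j) : Matrix.GeneralLinearGroup (Fin n) R :=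
  tGL i j h 1 * tGL j i h.symm (-1) * tGL i j h 1

lemma wGL_mem (i j : Fin n) (h : i ≠ j) : wGL R i j h ∈ Elem n R :=
  mul_mem (mul_mem (tGL_mem _ _ _ _) (tGL_mem _ _ _ _)) (tGL_mem _ _ _ _)

lemma colM_w (M : Matrix.GeneralLinearGroup (Fin n) R) (i j : Fin n) (h : i ≠ j) :
    colM (M * wGL R i j h) j = colM M i := by
  simp [wGL, ← mul_assoc, colM_mul, h, h.symm]

lemma colM_w_ne (M : Matrix.GeneralLinearGroup (Fin n) R) (i j : Fin n) (h : i ≠ j)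
    (k : Fin n) (hi : k ≠ i) (hj : k ≠ j) :
    colM (M * wGL R i j h) k = colM M k := by
  simp [wGL, ← mul_assoc, colM_mul, hi, hj]

lemma starCol_w (M : Matrix.GeneralLinearGroup (Fin n) R) (i j : Fin n) (h : i ≠ j) :
    starCol (M * wGL R i j h) j = starCol M i := by
  simp [wGL, ← mul_assoc, starCol_mul, h, h.symm]

lemma starCol_w_ne (M : Matrix.GeneralLinearGroup (Fin n) R) (i j : Fin n) (h : i ≠ j)
    (k : Fin n) (hi : k ≠ i) (hj : k ≠ j) :
    starCol (M * wGL R i j h) k = starCol M k := by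
  simp [wGL, ← mul_assoc, starCol_mul, hi, hj]

lemma exists_star (M : Matrix.GeneralLinearGroup (Fin n) R) (hM : M ∈ Elem n R) :
    ∃ N ∈ Elem n R, ∀ k, colM N k = starCol M k := by
  have key : ∀ (M : Matrix.GeneralLinearGroup (Fin n) R) (i j : Fin n) (h : i ≠ j) (r : R),
      (∃ N ∈ Elem n R, ∀ k, colM N k = starCol M k) →
      ∃ N ∈ Elem n R, ∀ k, colM N k = starCol (M * tGL i j h r) k := by
    rintro M i j h r ⟨N, hN, hk⟩
    refine ⟨N * tGL j i h.symm (-r), mul_mem hN (tGL_mem _ _ _ _), fun k => ?_⟩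
    rw [colM_mul, starCol_mul, hk, hk]
  unfold Elem at hM
  induction hM using Subgroup.closure_induction_right with
  | one =>
    refine ⟨1, one_mem _, fun k => ?_⟩
    funext l
    simp [colM, starCol, Matrix.one_apply, eq_comm]
  | mul_right x hx y hy ih =>
    obtain ⟨i, j, h, r, hr⟩ := hy
    have : y = tGL i j h r := Units.ext hr
    rw [this]
    exact key _ _ _ _ _ ih
  | mul_inv_cancel x hx y hy ih =>
    obtain ⟨i, j, h, r, hr⟩ := hy
    have : y = tGL i j h r := Units.ext hr
    rw [this, tGL_inv]
    exact key _ _ _ _ _ ih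

lemma starCol_mem [NeZero n] (M : Matrix.GeneralLinearGroup (Fin n) R) (hM : M ∈ Elem n R)
    (k : Fin n) : starCol M k ∈ Ecol n R := by
  obtain ⟨N, hN, h⟩ := exists_star M hM
  by_cases hk : k = 0
  · subst hk
    exact ⟨N, hN, (h 0).symm⟩
  · exact ⟨N * wGL R k 0 hk, mul_mem hN (wGL_mem _ _ _), by rw [← h, ← colM_w N k 0 hk]; rfl⟩

lemma F_eq_S [NeZero n] (I : Ideal R) (M : Matrix.GeneralLinearGroup (Fin n) R)
    (hM : M ∈ Elem n R) (u v : Fin n → R) (a : R) (ha : a ∈ I)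
    (hu : u = colM M 0) (hv : v = starCol M 1)
    (h1 : u ∈ Ecol n R) (h2 : ∀ i, (a • v) i ∈ I) (h3 : dotProduct u (a • v) = 0)
    (h4 : ∀ i, (a • u) i ∈ I) (h5 : v ∈ Ecol n R) (h6 : dotProduct (a • u) v = 0) :
    (PresentedGroup.of (StarGen.F u (a • v) h1 h2 h3) : StStar n R I) =
      PresentedGroup.of (StarGen.S (a • u) v h4 h5 h6) := by
  subst hu hv
  have := PresentedGroup.one_of_mem (rels := {w | StarRels n R I w})
    (StarRels.coinc M hM a ha h1 h2 h3 h4 h5 h6)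
  rw [map_mul, map_inv] at this
  exact mul_inv_eq_one.mp this

lemma S_add [NeZero n] (I : Ideal R) (u w x v : Fin n → R) (hx : x = u + w)
    (hu : ∀ i, u i ∈ I) (hw : ∀ i, w i ∈ I)
    (huw : ∀ i, x i ∈ I) (hv : v ∈ Ecol n R) (o1 : dotProduct u v = 0)
    (o2 : dotProduct w v = 0) (o3 : dotProduct x v = 0) :
    (PresentedGroup.of (StarGen.S x v huw hv o3) : StStar n R I) =
      PresentedGroup.of (StarGen.S u v hu hv o1) * PresentedGroup.of (StarGen.S w v hw hv o2) := by
  subst hx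
  have := PresentedGroup.one_of_mem (rels := {w | StarRels n R I w})
    (StarRels.addS u w v hu hw huw hv o1 o2 o3)
  rw [map_mul, map_mul, map_inv] at this
  exact (mul_inv_eq_one.mp this).symm

end Helpers

theorem stmt13 (n : ℕ) (hn : 4 ≤ n) [NeZero n] (R : Type) [CommRing R] (I : Ideal R)
    (M : Matrix.GeneralLinearGroup (Fin n) R) (hM : M ∈ Elem n R) (r a : R) (ha : a ∈ I)
    (h1 : r • colM M 0 + colM M 1 ∈ Ecol n R) (h2 : ∀ i, (a • starCol M 2) i ∈ I)
    (h3 : dotProduct (r • colM M 0 + colM M 1) (a • starCol M 2) = 0)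
    (h4 : colM M 0 ∈ Ecol n R) (h5 : ∀ i, ((a * r) • starCol M 2) i ∈ I)
    (h6 : dotProduct (colM M 0) ((a * r) • starCol M 2) = 0)
    (h7 : colM M 1 ∈ Ecol n R)
    (h8 : dotProduct (colM M 1) (a • starCol M 2) = 0) :
    (PresentedGroup.of (StarGen.F (r • colM M 0 + colM M 1) (a • starCol M 2) h1 h2 h3) :
        StStar n R I) =
      PresentedGroup.of (StarGen.F (colM M 0) ((a * r) • starCol M 2) h4 h5 h6) *
        PresentedGroup.of (StarGen.F (colM M 1) (a • starCol M 2) h7 h2 h8) := by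
  have hv := fun (i : ℕ) (h : i < n) => Nat.mod_eq_of_lt h
  have v0 : ((0 : Fin n) : ℕ) = 0 := rfl
  have v1 : ((1 : Fin n) : ℕ) = 1 := by
    obtain ⟨m, rfl⟩ : ∃ m, n = m + 4 := ⟨n - 4, by omega⟩
    exact hv 1 (by omega)
  have v2 : ((2 : Fin n) : ℕ) = 2 := by
    obtain ⟨m, rfl⟩ : ∃ m, n = m + 4 := ⟨n - 4, by omega⟩
    exact hv 2 (by omega)
  have n10 : (1 : Fin n) ≠ 0 := fun h => by have := congrArg Fin.val h; omega
  have n20 : (2 : Fin n) ≠ 0 := fun h => by have := congrArg Fin.val h; omega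
  have n21 : (2 : Fin n) ≠ 1 := fun h => by have := congrArg Fin.val h; omega
  have hE := starCol_mem M hM 2
  have hmul : ∀ (b : R), b ∈ I → ∀ (w : Fin n → R) (i : Fin n), (b • w) i ∈ I :=
    fun b hb w i => I.mul_mem_right _ hb
  have har : a * r ∈ I := I.mul_mem_right _ ha
  have sw : ∀ (b : R) (u v : Fin n → R), dotProduct u (b • v) = 0 → dotProduct (b • u) v = 0 := by
    intro b u v h
    rw [dotProduct_smul] at h
    rw [smul_dotProduct, h]
  let W21 := wGL R (2 : Fin n) 1 n21
  let W10 := wGL R (1 : Fin n) 0 n10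
  have mW21 : W21 ∈ Elem n R := wGL_mem _ _ _
  have mW10 : W10 ∈ Elem n R := wGL_mem _ _ _
  have A : ∀ N : Matrix.GeneralLinearGroup (Fin n) R,
      colM N 0 = colM (N * W21) 0 ∧ starCol N 2 = starCol (N * W21) 1 := fun N =>
    ⟨(colM_w_ne N _ _ n21 0 n20.symm n10.symm).symm, (starCol_w N _ _ n21).symm⟩
  have B : ∀ N : Matrix.GeneralLinearGroup (Fin n) R,
      colM N 1 = colM (N * W10 * W21) 0 ∧ starCol N 2 = starCol (N * W10 * W21) 1 := fun N =>
    ⟨by rw [← (A _).1]; exact (colM_w N _ _ n10).symm,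
     by rw [← (A _).2]; exact (starCol_w_ne N _ _ n10 2 n21 n20).symm⟩
  have mT := tGL_mem (0 : Fin n) 1 n10.symm r
  have C1 : r • colM M 0 + colM M 1 = colM (M * tGL (0 : Fin n) 1 n10.symm r) 1 := by
    rw [colM_mul, if_pos rfl, add_comm]
  have C2 : starCol M 2 = starCol (M * tGL (0 : Fin n) 1 n10.symm r) 2 := by
    rw [starCol_mul, if_neg n20, add_zero]
  rw [F_eq_S I (M * tGL (0 : Fin n) 1 n10.symm r * W10 * W21)
      (mul_mem (mul_mem (mul_mem hM mT) mW10) mW21) _ _ a ha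
      (C1.trans (B _).1) (C2.trans (B _).2) h1 h2 h3 (hmul a ha _) hE (sw _ _ _ h3),
    F_eq_S I (M * W21) (mul_mem hM mW21) _ _ (a * r) har (A M).1 (A M).2 h4 h5 h6
      (hmul _ har _) hE (sw _ _ _ h6),
    F_eq_S I (M * W10 * W21) (mul_mem (mul_mem hM mW10) mW21) _ _ a ha (B M).1 (B M).2 h7 h2 h8
      (hmul _ ha _) hE (sw _ _ _ h8)]
  exact S_add I _ _ _ _ (by rw [smul_add, smul_smul]) _ _ _ _ _ _ _
end

section
/- Let R be a commutative ring, I a splitting ideal of R, and n ≥ 4. Then there is a group isomorphism Θ : St*(n,R,I) → St(n,R,I) such that φ(Θ(F(u,v))) = t(u,v) and φ(Θ(S(u,v))) = t(u,v) for all generators, and Θ(F(e_i, e_j·s)) = x_{ij}(s) for all i ≠ j and s ∈ I. -/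
open scoped commutatorElement

/-- Generators of the Steinberg group: triples (i,j,r) with i ≠ j. -/
abbrev StGen (n : ℕ) (R : Type) : Type := {p : Fin n × Fin n // p.1 ≠ p.2} × R

/-- The Steinberg relations. -/
inductive StRels (n : ℕ) (R : Type) [CommRing R] : FreeGroup (StGen n R) → Prop
  | add (i j : Fin n) (hij : i ≠ j) (r s : R) :
      StRels n R (FreeGroup.of (⟨(i, j), hij⟩, r) * FreeGroup.of (⟨(i, j), hij⟩, s) *
        (FreeGroup.of (⟨(i, j), hij⟩, r + s))⁻¹)
  | commZero (i j h k : Fin n) (hij : i ≠ j) (hhk : h ≠ k) (hjh : j ≠ h) (hik : i ≠ k) (r s : R) :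
      StRels n R ⁅(FreeGroup.of (⟨(i, j), hij⟩, r) : FreeGroup (StGen n R)), FreeGroup.of (⟨(h, k), hhk⟩, s)⁆
  | commAdd (i j k : Fin n) (hij : i ≠ j) (hjk : j ≠ k) (hik : i ≠ k) (r s : R) :
      StRels n R (⁅(FreeGroup.of (⟨(i, j), hij⟩, r) : FreeGroup (StGen n R)), FreeGroup.of (⟨(j, k), hjk⟩, s)⁆ *
        (FreeGroup.of (⟨(i, k), hik⟩, r * s))⁻¹)

/-- The Steinberg group `St(n, R)`. -/
abbrev SteinbergGroup (n : ℕ) (R : Type) [CommRing R] : Type :=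
  PresentedGroup {w | StRels n R w}

/-- The generator `x_{ij}(r)` of the Steinberg group. -/
def stx (n : ℕ) (R : Type) [CommRing R] (i j : Fin n) (hij : i ≠ j) (r : R) :
    SteinbergGroup n R :=
  PresentedGroup.of (⟨(i, j), hij⟩, r)

namespace Stb

section A
variable {n : ℕ} {R : Type} [CommRing R]

/-- Total version of the generators. -/
def sx (i j : Fin n) (r : R) : SteinbergGroup n R :=
  if h : i ≠ j then stx n R i j h r else 1

lemma sx_ne {i j : Fin n} (h : i ≠ j) (r : R) : sx i j r = stx n R i j h r := by
  simp [sx, h]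

lemma sx_self (i : Fin n) (r : R) : sx i i r = (1 : SteinbergGroup n R) := by simp [sx]

lemma sx_add (i j : Fin n) (r s : R) : sx i j (r + s) = sx i j r * sx i j s := by
  by_cases h : i ≠ j
  · simp only [sx_ne h]
    have := PresentedGroup.one_of_mem (rels := {w | StRels n R w}) (StRels.add i j h r s)
    simp only [map_mul, map_inv] at this
    exact (mul_inv_eq_one.mp this).symm
  · simp [sx, h]

lemma sx_zero (i j : Fin n) : sx i j (0 : R) = (1 : SteinbergGroup n R) := by
  have := sx_add i j (0 : R) 0
  simpa using this

lemma sx_neg (i j : Fin n) (r : R) : sx i j (-r) = (sx i j r)⁻¹ := by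
  rw [eq_inv_iff_mul_eq_one, ← sx_add]; simp [sx_zero]

lemma sx_comm {i j h k : Fin n} (hjh : j ≠ h) (hik : i ≠ k) (r s : R) :
    Commute (sx i j r) (sx h k s) := by
  by_cases hij : i ≠ j
  · by_cases hhk : h ≠ k
    · simp only [sx_ne hij, sx_ne hhk]
      have := PresentedGroup.one_of_mem (rels := {w | StRels n R w})
        (StRels.commZero i j h k hij hhk hjh hik r s)
      rw [map_commutatorElement] at this
      exact commutatorElement_eq_one_iff_commute.mp this
    · simp [sx, hhk]
  · simp [sx, hij]

lemma sx_mul {i j k : Fin n} (hij : i ≠ j) (hjk : j ≠ k) (hik : i ≠ k) (r s : R) :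
    sx i j r * sx j k s = sx i k (r * s) * sx j k s * sx i j r := by
  simp only [sx_ne hij, sx_ne hjk, sx_ne hik]
  have := PresentedGroup.one_of_mem (rels := {w | StRels n R w})
        (StRels.commAdd i j k hij hjk hik r s)
  rw [map_mul, map_commutatorElement, map_inv, mul_inv_eq_one, commutatorElement_def] at this
  change stx n R i j hij r * stx n R j k hjk s * (stx n R i j hij r)⁻¹ * (stx n R j k hjk s)⁻¹
    = stx n R i k hik (r * s) at this
  rw [← this]; group

lemma comm_row (i : Fin n) (k l : Fin n) (r s : R) : Commute (sx i k r) (sx i l s) := by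
  by_cases h : k = i
  · subst h; simp [sx_self]
  by_cases h' : l = i
  · subst h'; simp [sx_self]
  exact sx_comm h (Ne.symm h') r s

lemma comm_col (i : Fin n) (k l : Fin n) (r s : R) : Commute (sx k i r) (sx l i s) := by
  by_cases h : k = i
  · subst h; simp [sx_self]
  by_cases h' : l = i
  · subst h'; simp [sx_self]
  exact sx_comm (Ne.symm h') h r s

/-- one-parameter subgroup -/
def sxHom (i j : Fin n) : Multiplicative R →* SteinbergGroup n R where
  toFun r := sx i j r.toAdd
  map_one' := sx_zero i j
  map_mul' a b := sx_add i j a.toAdd b.toAdd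

/-- column subgroup -/
def colHom (i : Fin n) : (Fin n → Multiplicative R) →* SteinbergGroup n R :=
  MonoidHom.noncommPiCoprod (fun k => sxHom k i) (fun _ _ _ _ _ => comm_col _ _ _ _ _)

/-- row subgroup -/
def rowHom (i : Fin n) : (Fin n → Multiplicative R) →* SteinbergGroup n R :=
  MonoidHom.noncommPiCoprod (fun k => sxHom i k) (fun _ _ _ _ _ => comm_row _ _ _ _ _)

def col (i : Fin n) (p : Fin n → R) : SteinbergGroup n R :=
  colHom i (fun k => Multiplicative.ofAdd (p k))
def row (i : Fin n) (p : Fin n → R) : SteinbergGroup n R :=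
  rowHom i (fun k => Multiplicative.ofAdd (p k))

lemma col_add (i : Fin n) (p q : Fin n → R) : col i (p + q) = col i p * col i q := by
  simp only [col, ← map_mul]; rfl
lemma row_add (i : Fin n) (p q : Fin n → R) : row i (p + q) = row i p * row i q := by
  simp only [row, ← map_mul]; rfl
lemma ofAdd_single (k : Fin n) (c : R) :
    (fun m => Multiplicative.ofAdd ((Pi.single k c : Fin n → R) m)) =
      Pi.mulSingle k (Multiplicative.ofAdd c) := by
  funext m
  by_cases h : m = k
  · subst h; simp
  · simp [h]
lemma col_single (i k : Fin n) (c : R) : col i (Pi.single k c) = sx k i c := by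
  rw [col, ofAdd_single]
  exact MonoidHom.noncommPiCoprod_mulSingle _ _ _
lemma row_single (i k : Fin n) (c : R) : row i (Pi.single k c) = sx i k c := by
  rw [row, ofAdd_single]
  exact MonoidHom.noncommPiCoprod_mulSingle _ _ _
lemma col_zero (i : Fin n) : col i (0 : Fin n → R) = 1 := by
  have := col_add i (0 : Fin n → R) 0
  simpa using this
lemma row_zero (i : Fin n) : row i (0 : Fin n → R) = 1 := by
  have := row_add i (0 : Fin n → R) 0
  simpa using this
lemma row_neg (i : Fin n) (p : Fin n → R) : row i (-p) = (row i p)⁻¹ := by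
  rw [eq_inv_iff_mul_eq_one, ← row_add]; simp [row_zero]

lemma vec_ind {P : (Fin n → R) → Prop} (h0 : P 0) (hadd : ∀ p q, P p → P q → P (p + q))
    (p : Fin n → R) (hs : ∀ k, P (Pi.single k (p k))) : P p := by
  have := Finset.sum_induction (s := Finset.univ) (fun k => (Pi.single k (p k) : Fin n → R)) P
    (fun a b => hadd a b) h0 (fun k _ => hs k)
  rwa [Finset.univ_sum_single] at this

lemma col_comm_sx (i k : Fin n) (p : Fin n → R) (c : R) : Commute (col i p) (sx k i c) := by
  refine vec_ind (P := fun p => Commute (col i p) (sx k i c)) (by simp [col_zero]) ?_ p ?_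
  · intro p q hp hq; rw [col_add]; exact hp.mul_left hq
  · intro m; rw [col_single]; exact comm_col _ _ _ _ _

/-- conjugating `x_jk` by a column. -/
lemma col_sx {i j k : Fin n} (hij : i ≠ j) (hik : i ≠ k) (hjk : j ≠ k) (p : Fin n → R) (a : R) :
    col i p * sx j k a = sx j i (-(p k * a)) * sx j k a * col i p := by
  refine vec_ind (P := fun p => col i p * sx j k a = sx j i (-(p k * a)) * sx j k a * col i p)
    (by simp [col_zero, sx_zero]) ?_ p ?_
  · intro p q hp hq
    rw [col_add, mul_assoc, hq, ← mul_assoc, ← mul_assoc, (col_comm_sx i j p _).eq,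
      mul_assoc _ (col i p), hp]
    simp only [Pi.add_apply, add_mul, neg_add, sx_add, ← mul_assoc]
    rw [(comm_col i j j _ _).eq]
  · intro m
    rw [col_single]
    by_cases hm : m = k
    · subst hm
      have := sx_mul hjk (Ne.symm hik) (Ne.symm hij) (-a) (p m)
      simp only [Pi.single_eq_same]
      have e : -(p m * a) = -a * p m := by ring
      rw [e]
      rw [sx_neg j m] at this
      have h2 : Commute (sx j m a) (sx j i (-a * p m)) := comm_row _ _ _ _ _
      calc sx m i (p m) * sx j m a = sx j m a * ((sx j m a)⁻¹ * sx m i (p m)) * sx j m a := by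
            group
        _ = (sx j m a * sx j i (-a * p m)) * sx m i (p m) := by rw [this]; group
        _ = _ := by rw [h2.eq]
    · simp only [Pi.single_eq_of_ne (Ne.symm hm), zero_mul, neg_zero, sx_zero, one_mul]
      by_cases hmi : m = i
      · subst hmi; simp [sx_self]
      exact (sx_comm hij hm _ _).eq

/-- conjugating a column by `x_jk`, j,k ≠ i. -/
lemma sx_col {i j k : Fin n} (hij : i ≠ j) (hik : i ≠ k) (hjk : j ≠ k) (p : Fin n → R) (a : R) :
    sx j k a * col i p * (sx j k a)⁻¹ = col i (p + Pi.single j (a * p k)) := by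
  have h1 := col_sx hij hik hjk p a
  rw [mul_comm (p k) a, sx_neg] at h1
  rw [mul_inv_eq_iff_eq_mul, col_add, col_single, (col_comm_sx i j p _).eq, mul_assoc, h1]
  group

lemma col_comm_sx2 {i j m : Fin n} (him : i ≠ m) (p : Fin n → R) (hj : p j = 0) (c : R) :
    Commute (col i p) (sx m j c) := by
  refine vec_ind (P := fun p => Commute (col i p) (sx m j c)) (by simp [col_zero]) ?_ p ?_
  · intro p q hp hq; rw [col_add]; exact hp.mul_left hq
  · intro k; rw [col_single]
    by_cases hk : k = j
    · subst hk; simp [hj, sx_zero]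
    · exact sx_comm him hk _ _

lemma col_col {i j : Fin n} (p q : Fin n → R) (hp : p j = 0) (hq : q i = 0) :
    Commute (col i p) (col j q) := by
  refine vec_ind (P := fun q => Commute (col i p) (col j q)) (by simp [col_zero]) ?_ q ?_
  · intro p q hp hq; rw [col_add]; exact hp.mul_right hq
  · intro k; rw [col_single]
    by_cases hk : k = i
    · subst hk; simp [hq, sx_zero]
    · exact col_comm_sx2 (Ne.symm hk) p hp _

/-- conjugating `x_ij` by the column `C_i(p)`. -/
lemma col_sx' {i j : Fin n} (hij : i ≠ j) (p : Fin n → R) (hi : p i = 0) (hj : p j = 0) :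
    col i p * sx i j 1 = col j p * sx i j 1 * col i p := by
  refine (vec_ind (P := fun p => p i = 0 ∧ p j = 0 ∧
    col i p * sx i j 1 = col j p * sx i j 1 * col i p) (by simp [col_zero]) ?_ p ?_).2.2
  · rintro p q ⟨h1, h2, h3⟩ ⟨h4, h5, h6⟩
    refine ⟨by simp [h1, h4], by simp [h2, h5], ?_⟩
    rw [col_add, col_add, mul_assoc, h6, ← mul_assoc, ← mul_assoc, (col_col p q h2 h4).eq,
      mul_assoc _ (col i p), h3, ← col_add, ← col_add]
    rw [add_comm p q, col_add, col_add, ← col_add i, add_comm q p, col_add i]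
    simp only [mul_assoc]
  · intro k
    by_cases hk : k = i
    · subst hk; simp [hi, col_zero]
    by_cases hk' : k = j
    · subst hk'; simp [hj, col_zero]
    refine ⟨by simp [Ne.symm hk], by simp [Ne.symm hk'], ?_⟩
    rw [col_single, col_single]
    simpa using sx_mul hk hij hk' (p k) 1

lemma ZZ {G : Type*} [Group G] {A A' B D E : G} (h1 : A * D = D * A) (h2 : B * D = E * D * B)
    (h3 : A * B = A' * B * A) (h4 : A' * E = E * A') (h5 : E * D = D * E) :
    A * E * A⁻¹ * E⁻¹ = A' * D * A'⁻¹ * D⁻¹ := by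
  have e1 : A * E * D * B = A' * E * D * A'⁻¹ * A * B := by
    calc A * E * D * B = A * (E * D * B) := by group
      _ = (A * B) * D := by rw [← h2]; group
      _ = A' * B * (A * D) := by rw [h3]; group
      _ = A' * (B * D) * A := by rw [h1]; group
      _ = A' * E * D * A'⁻¹ * (A' * B * A) := by rw [h2]; group
      _ = _ := by rw [← h3]; group
  have e2 : A * E * D = A' * E * D * A'⁻¹ * A := mul_right_cancel e1
  have h1' : D * A⁻¹ = A⁻¹ * D := (Commute.inv_right (show Commute D A from h1.symm)).eq
  calc A * E * A⁻¹ * E⁻¹ = A * E * (A⁻¹ * D) * D⁻¹ * E⁻¹ := by group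
    _ = A * E * D * A⁻¹ * (E * D)⁻¹ := by rw [← h1']; group
    _ = (A' * E) * D * A'⁻¹ * (E * D)⁻¹ := by rw [e2]; group
    _ = E * (A' * D * A'⁻¹ * D⁻¹ * E⁻¹) := by
        rw [h4]; group
    _ = A' * D * A'⁻¹ * D⁻¹ := by
        have c1 : Commute E A' := h4.symm
        have c2 : Commute E D := h5
        have := ((c1.mul_right c2).mul_right c1.inv_right).mul_right c2.inv_right
        rw [← mul_assoc, this.eq]; group

end A
end Stb

namespace Stb
section B
variable {n : ℕ} {R : Type} [CommRing R]

def RR (i k l : Fin n) (a b : R) : SteinbergGroup n R := sx i k a * sx i l b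

lemma RR_add (i k l : Fin n) (a b a' b' : R) :
    RR i k l (a + a') (b + b') = RR i k l a b * RR i k l a' b' := by
  simp only [RR, sx_add]
  rw [mul_assoc, mul_assoc, ← mul_assoc (sx i k a'), (comm_row i k l a' b).eq]
  simp only [mul_assoc]

lemma RR_zero (i k l : Fin n) : RR i k l (0 : R) 0 = 1 := by simp [RR, sx_zero]

lemma RR_swap (i k l : Fin n) (a b : R) : RR i k l a b = RR i l k b a := (comm_row _ _ _ _ _).eq

lemma RR_comm {i j k l : Fin n} (hik : i ≠ k) (hil : i ≠ l) (hjk : j ≠ k) (hjl : j ≠ l)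
    (a b a' b' : R) : Commute (RR i k l a b) (RR j k l a' b') := by
  unfold RR
  refine Commute.mul_left (Commute.mul_right ?_ ?_) (Commute.mul_right ?_ ?_) <;>
  · apply sx_comm <;> first | assumption | (apply Ne.symm; assumption)

lemma RR_comm' (i k l : Fin n) (k' l' : Fin n) (a b a' b' : R) :
    Commute (RR i k l a b) (RR i k' l' a' b') := by
  unfold RR
  refine Commute.mul_left (Commute.mul_right ?_ ?_) (Commute.mul_right ?_ ?_) <;>
  apply comm_row

lemma col_RR {i j k l : Fin n} (hij : i ≠ j) (hik : i ≠ k) (hil : i ≠ l) (hjk : j ≠ k)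
    (hjl : j ≠ l) (p : Fin n → R) (a b : R) (h : p k * a + p l * b = 0) :
    Commute (col i p) (RR j k l a b) := by
  unfold RR
  show _ = _
  rw [← mul_assoc, col_sx hij hik hjk, mul_assoc, col_sx hij hil hjl]
  have h2 : sx j k a * sx j i (-(p l * b)) = sx j i (-(p l * b)) * sx j k a :=
    (comm_row _ _ _ _ _).eq
  calc _ = sx j i (-(p k * a)) * (sx j k a * sx j i (-(p l * b))) * sx j l b * col i p := by
        simp only [mul_assoc]
    _ = (sx j i (-(p k * a)) * sx j i (-(p l * b))) * sx j k a * sx j l b * col i p := by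
        rw [h2]; simp only [mul_assoc]
    _ = _ := by rw [← sx_add, ← neg_add, h]; simp [sx_zero]

lemma sx_RR {i j k l : Fin n} (hij : i ≠ j) (hik : i ≠ k) (hil : i ≠ l) (hjk : j ≠ k)
    (hjl : j ≠ l) (s a b : R) :
    sx j i s * RR i k l a b = RR j k l (s * a) (s * b) * RR i k l a b * sx j i s := by
  unfold RR
  have h2 : sx i k a * sx j l (s * b) = sx j l (s * b) * sx i k a :=
    (sx_comm (Ne.symm hjk) hil _ _).eq
  calc sx j i s * (sx i k a * sx i l b) = (sx j i s * sx i k a) * sx i l b := by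
        simp only [mul_assoc]
    _ = sx j k (s * a) * sx i k a * (sx j i s * sx i l b) := by
        rw [sx_mul (Ne.symm hij) hik hjk]; simp only [mul_assoc]
    _ = sx j k (s * a) * (sx i k a * sx j l (s * b)) * sx i l b * sx j i s := by
        rw [sx_mul (Ne.symm hij) hil hjl]; simp only [mul_assoc]
    _ = _ := by rw [h2]; simp only [mul_assoc]

def Zf (p : Fin n → R) (i k l : Fin n) (a b : R) : SteinbergGroup n R :=
  col i p * RR i k l a b * (col i p)⁻¹ * (RR i k l a b)⁻¹

def Y (u : Fin n → R) (i k l : Fin n) (c : R) : SteinbergGroup n R :=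
  col i u * RR i k l (-(c * u l)) (c * u k) * (col i u)⁻¹ *
    RR i k l ((u i - 1) * (-(c * u l))) ((u i - 1) * (c * u k))

def pp (u : Fin n → R) (i j : Fin n) : Fin n → R :=
  fun m => if m = i ∨ m = j then 0 else u m

lemma pp_comm (u : Fin n → R) (i j : Fin n) : pp u i j = pp u j i := by
  funext m; simp only [pp, or_comm]

lemma pp_dec (u : Fin n → R) {i j : Fin n} (hij : i ≠ j) :
    u = pp u i j + Pi.single j (u j) + Pi.single i (u i) := by
  funext m
  by_cases h : m = i
  · subst h; simp [pp, hij]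
  by_cases h' : m = j
  · subst h'; simp [pp, h]
  simp [pp, h, h']

lemma col_pp (u : Fin n → R) {i j : Fin n} (hij : i ≠ j) :
    col i u = col i (pp u i j) * sx j i (u j) := by
  conv_lhs => rw [pp_dec u hij]
  rw [col_add, col_add, col_single, col_single, sx_self, mul_one]

/-- four distinct indices -/
structure D4 (i j k l : Fin n) : Prop where
  ij : i ≠ j
  ik : i ≠ k
  il : i ≠ l
  jk : j ≠ k
  jl : j ≠ l
  kl : k ≠ l

lemma D4.sw {i j k l : Fin n} (h : D4 i j k l) : D4 j i k l :=
  ⟨h.ij.symm, h.jk, h.jl, h.ik, h.il, h.kl⟩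

lemma D4.mid {i j k l : Fin n} (h : D4 i j k l) : D4 i k j l :=
  ⟨h.ik, h.ij, h.il, h.jk.symm, h.kl, h.jl⟩

lemma D4.last {i j k l : Fin n} (h : D4 i j k l) : D4 i j l k :=
  ⟨h.ij, h.il, h.ik, h.jl, h.jk, h.kl.symm⟩

lemma pp_k {i j k l : Fin n} (h : D4 i j k l) (u : Fin n → R) : pp u i j k = u k := by
  simp [pp, h.ik.symm, h.jk.symm]

lemma pp_orth {i j k l : Fin n} (h : D4 i j k l) (u : Fin n → R) (c t : R) :
    pp u i j k * (t * -(c * u l)) + pp u i j l * (t * (c * u k)) = 0 := by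
  rw [pp_k h, pp_k h.last]; ring

lemma Zf_comm {i j k l : Fin n} (h : D4 i j k l) (u : Fin n → R) (c t : R) (a b : R) :
    Commute (RR j k l (t * -(c * u l)) (t * (c * u k))) (Zf (pp u i j) i k l a b) := by
  have h1 := (col_RR h.ij h.ik h.il h.jk h.jl (pp u i j) _ _ (pp_orth h u c t)).symm
  have h2 : Commute (RR j k l (t * -(c * u l)) (t * (c * u k))) (RR i k l a b) :=
    RR_comm h.jk h.jl h.ik h.il _ _ _ _
  exact ((h1.mul_right h2).mul_right h1.inv_right).mul_right h2.inv_right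

lemma Y_eq {i j k l : Fin n} (h : D4 i j k l) (u : Fin n → R) (c : R) :
    Y u i k l c = RR j k l (u j * -(c * u l)) (u j * (c * u k)) *
      Zf (pp u i j) i k l (-(c * u l)) (c * u k) * RR i k l (u i * -(c * u l)) (u i * (c * u k)) := by
  have h1 := (col_RR h.ij h.ik h.il h.jk h.jl (pp u i j) _ _ (pp_orth h u c (u j)))
  have h2 := sx_RR h.ij h.ik h.il h.jk h.jl (u j) (-(c * u l)) (c * u k)
  have h3 := RR_add i k l (-(c * u l)) (c * u k) ((u i - 1) * (-(c * u l))) ((u i - 1) * (c * u k))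
  rw [show -(c * u l) + (u i - 1) * -(c * u l) = u i * -(c * u l) by ring,
    show (c * u k) + (u i - 1) * (c * u k) = u i * (c * u k) by ring] at h3
  rw [Y, Zf, col_pp u h.ij, h3]
  calc _ = col i (pp u i j) * (sx j i (u j) * RR i k l (-(c * u l)) (c * u k)) * (sx j i (u j))⁻¹
         * (col i (pp u i j))⁻¹ * RR i k l ((u i - 1) * (-(c * u l))) ((u i - 1) * (c * u k)) := by
        group
    _ = (col i (pp u i j) * RR j k l (u j * -(c * u l)) (u j * (c * u k))) *
        RR i k l (-(c * u l)) (c * u k) *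
         (col i (pp u i j))⁻¹ * RR i k l ((u i - 1) * (-(c * u l))) ((u i - 1) * (c * u k)) := by
        rw [h2]; group
    _ = _ := by rw [h1.eq]; group

lemma Zf_eq {i j k l : Fin n} (h : D4 i j k l) (u : Fin n → R) (c : R) :
    Zf (pp u i j) i k l (-(c * u l)) (c * u k) = Zf (pp u j i) j k l (-(c * u l)) (c * u k) := by
  rw [pp_comm u j i]
  have o := pp_orth h u c 1
  rw [one_mul, one_mul] at o
  refine ZZ (B := sx i j 1) (col_RR h.ij h.ik h.il h.jk h.jl _ _ _ o).eq ?_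
    (col_sx' h.ij _ (by simp [pp]) (by simp [pp]))
    (col_RR h.ij.symm h.jk h.jl h.ik h.il _ _ _ o).eq
    (RR_comm h.ik h.il h.jk h.jl _ _ _ _).eq
  simpa using sx_RR h.ij.symm h.jk h.jl h.ik h.il 1 (-(c * u l)) (c * u k)

/-- (B) independence of the auxiliary index -/
lemma Y_indep {i j k l : Fin n} (h : D4 i j k l) (u : Fin n → R) (c : R) :
    Y u i k l c = Y u j k l c := by
  rw [Y_eq h, Y_eq h.sw, ← Zf_eq h]
  have h1 := Zf_comm h u c (u j) (-(c * u l)) (c * u k)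
  have h2 := Zf_comm h.sw u c (u i) (-(c * u l)) (c * u k)
  rw [← Zf_eq h] at h2
  have h3 : Commute (RR j k l (u j * -(c * u l)) (u j * (c * u k)))
    (RR i k l (u i * -(c * u l)) (u i * (c * u k))) := RR_comm h.jk h.jl h.ik h.il _ _ _ _
  rw [h2.eq, mul_assoc, mul_assoc, ← h3.eq, ← mul_assoc, h1.eq, mul_assoc]

/-- (C) -/
lemma Y_C {i j k l : Fin n} (h : D4 i j k l) (u : Fin n → R) (c a : R) :
    sx j i a * Y u i k l c * (sx j i a)⁻¹ = Y (u + Pi.single j (a * u i)) i k l c := by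
  have e1 : pp (u + Pi.single j (a * u i)) i j = pp u i j := by
    funext m
    by_cases hm : m = j
    · subst hm; simp [pp]
    · simp [pp, hm]
  rw [Y_eq h, Y_eq h, e1]
  simp only [Pi.add_apply, Pi.single_eq_same, Pi.single_eq_of_ne h.jl.symm,
    Pi.single_eq_of_ne h.jk.symm, Pi.single_eq_of_ne h.ij, add_zero, add_mul, RR_add]
  generalize hal : -(c * u l) = al
  generalize hbe : c * u k = be
  have h1 : Commute (sx j i a) (RR j k l (u j * al) (u j * be)) :=
    (comm_row _ _ _ _ _).mul_right (comm_row _ _ _ _ _)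
  have h2 := sx_RR h.ij h.ik h.il h.jk h.jl a al be
  have h3 := sx_RR h.ij h.ik h.il h.jk h.jl a (u i * al) (u i * be)
  have h4 : Commute (RR j k l (a * al) (a * be)) (Zf (pp u i j) i k l al be) := by
    rw [← hal, ← hbe]; exact Zf_comm h u c a _ _
  have h4' : Commute (RR j k l (a * (u i * al)) (a * (u i * be))) (Zf (pp u i j) i k l al be) := by
    rw [← hal, ← hbe, ← mul_assoc, ← mul_assoc]; exact Zf_comm h u c (a * u i) _ _
  have h5 : Commute (sx j i a) (col i (pp u i j)) := (col_comm_sx _ _ _ _).symm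
  have h7 : Commute (RR j k l (a * al) (a * be)) (col i (pp u i j)) := by
    rw [← hal, ← hbe]
    exact (col_RR h.ij h.ik h.il h.jk h.jl (pp u i j) _ _ (pp_orth h u c a)).symm
  have h8 : Commute (RR j k l (a * al) (a * be)) (RR i k l al be) :=
    RR_comm h.jk h.jl h.ik h.il _ _ _ _
  have h2' : sx j i a * RR i k l al be * (sx j i a)⁻¹ = RR j k l (a * al) (a * be) * RR i k l al be := by
    rw [h2]; group
  have h5' : sx j i a * col i (pp u i j) * (sx j i a)⁻¹ = col i (pp u i j) := by
    rw [h5.eq]; group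
  have h6 : sx j i a * Zf (pp u i j) i k l al be * (sx j i a)⁻¹ = Zf (pp u i j) i k l al be := by
    have : sx j i a * Zf (pp u i j) i k l al be * (sx j i a)⁻¹ =
      (sx j i a * col i (pp u i j) * (sx j i a)⁻¹) * (sx j i a * RR i k l al be * (sx j i a)⁻¹) *
      (sx j i a * col i (pp u i j) * (sx j i a)⁻¹)⁻¹ * (sx j i a * RR i k l al be * (sx j i a)⁻¹)⁻¹ := by
      rw [Zf]; group
    rw [this, h2', h5', mul_inv_rev, ← mul_assoc, ← mul_assoc, ← h7.eq]
    have h9 : Commute (RR j k l (a * al) (a * be))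
      (col i (pp u i j) * RR i k l al be * (col i (pp u i j))⁻¹ * (RR i k l al be)⁻¹) :=
      ((h7.mul_right h8).mul_right h7.inv_right).mul_right h8.inv_right
    calc _ = RR j k l (a * al) (a * be) *
      (col i (pp u i j) * RR i k l al be * (col i (pp u i j))⁻¹ * (RR i k l al be)⁻¹) *
        (RR j k l (a * al) (a * be))⁻¹ := by group
      _ = _ := by rw [h9.eq, Zf]; group
  calc _ = (sx j i a * RR j k l (u j * al) (u j * be)) * (sx j i a)⁻¹ *
        (sx j i a * Zf (pp u i j) i k l al be * (sx j i a)⁻¹) *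
        (sx j i a * RR i k l (u i * al) (u i * be)) * (sx j i a)⁻¹ := by group
    _ = RR j k l (u j * al) (u j * be) * (Zf (pp u i j) i k l al be *
      RR j k l (a * (u i * al)) (a * (u i * be))) * RR i k l (u i * al) (u i * be) := by
        rw [h1.eq, h6, h3]; group
    _ = _ := by rw [← h4'.eq]; simp only [mul_assoc]
end B
end Stb

namespace Stb
section C
variable {n : ℕ} {R : Type} [CommRing R]

lemma sx_conj {i k b : Fin n} (hik : i ≠ k) (hkb : k ≠ b) (hib : i ≠ b) (r a : R) :
    sx k b r * sx i k a * (sx k b r)⁻¹ = sx i k a * sx i b (-(a * r)) := by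
  have h := sx_mul hik hkb hib a r
  rw [mul_inv_eq_iff_eq_mul, (comm_row i k b _ _).eq, sx_neg, mul_assoc, h]
  group

lemma Y_conj (g : SteinbergGroup n R) (u : Fin n → R) (i k l : Fin n) (c : R) :
    g * Y u i k l c * g⁻¹ = (g * col i u * g⁻¹) * (g * RR i k l (-(c * u l)) (c * u k) * g⁻¹) *
      (g * col i u * g⁻¹)⁻¹ *
      (g * RR i k l ((u i - 1) * (-(c * u l))) ((u i - 1) * (c * u k)) * g⁻¹) := by
  rw [Y]; group

lemma RR_conj (g : SteinbergGroup n R) (i k l : Fin n) (a b : R) :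
    g * RR i k l a b * g⁻¹ = (g * sx i k a * g⁻¹) * (g * sx i l b * g⁻¹) := by
  rw [RR]; group

lemma comm_conj {G : Type*} [Group G] {g x : G} (h : Commute g x) : g * x * g⁻¹ = x := by
  rw [h.eq]; group

lemma Y_A1 {i k l a b : Fin n} (_ : i ≠ k) (_ : i ≠ l) (hia : i ≠ a) (hib : i ≠ b)
    (hab : a ≠ b) (hak : a ≠ k) (hal : a ≠ l) (u : Fin n → R) (c r : R) :
    sx a b r * Y u i k l c * (sx a b r)⁻¹ = Y (u + Pi.single a (r * u b)) i k l c := by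
  rw [Y_conj, sx_col hia hib hab]
  simp only [RR_conj, comm_conj (sx_comm hib.symm hak _ _), comm_conj (sx_comm hib.symm hal _ _)]
  rw [Y]
  simp only [Pi.add_apply, Pi.single_eq_of_ne hia, Pi.single_eq_of_ne hak.symm,
    Pi.single_eq_of_ne hal.symm, add_zero, RR]

lemma Y_A2a {i k l : Fin n} (hik : i ≠ k) (hil : i ≠ l) (hkl : k ≠ l)
    (u : Fin n → R) (c r : R) :
    sx k l r * Y u i k l c * (sx k l r)⁻¹ = Y (u + Pi.single k (r * u l)) i k l c := by
  rw [Y_conj, sx_col hik hil hkl]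
  simp only [RR_conj, comm_conj (sx_comm hil.symm hkl _ _), sx_conj hik hkl hil]
  rw [Y]
  simp only [Pi.add_apply, Pi.single_eq_of_ne hik, Pi.single_eq_same,
    Pi.single_eq_of_ne hkl.symm, add_zero, RR]
  simp only [mul_assoc (sx i k _), ← sx_add]
  congr 4
  · congr 2; ring_nf
  all_goals ring

lemma Y_swap (u : Fin n → R) (i k l : Fin n) (c : R) : Y u i k l c = Y u i l k (-c) := by
  rw [Y, Y, RR_swap i l k, RR_swap i l k]
  congr 3
  all_goals ring_nf

lemma Y_D {i b k l : Fin n} (h : D4 i b k l) (u : Fin n → R) (c d : R) :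
    Y u i k l c * Y u i b l d = col i u *
      (RR i k l (-(c * u l)) (c * u k) * RR i b l (-(d * u l)) (d * u b)) * (col i u)⁻¹ *
      (RR i k l ((u i - 1) * -(c * u l)) ((u i - 1) * (c * u k)) *
        RR i b l ((u i - 1) * -(d * u l)) ((u i - 1) * (d * u b))) := by
  have hc : Commute (RR i k l ((u i - 1) * -(c * u l)) ((u i - 1) * (c * u k))) (Y u i b l d) := by
    rw [Y_indep h.mid]
    have hh : ∀ g y : SteinbergGroup n R, g * y * g⁻¹ = y → Commute g y := by
      intro g y h; exact mul_inv_eq_iff_eq_mul.mp h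
    apply hh
    have e1 := Y_A1 (i := k) (k := b) (l := l) (a := i) (b := l) h.jk.symm h.kl h.ik.symm h.kl h.il
      h.ij h.il u d ((u i - 1) * (c * u k))
    have e2 := Y_C h.mid.sw (u + Pi.single i ((u i - 1) * (c * u k) * u l)) d ((u i - 1) * -(c * u l))
    rw [RR]
    calc _ = sx i k ((u i - 1) * -(c * u l)) * (sx i l ((u i - 1) * (c * u k)) * Y u k b l d *
        (sx i l ((u i - 1) * (c * u k)))⁻¹) * (sx i k ((u i - 1) * -(c * u l)))⁻¹ := by group
      _ = _ := by
        rw [e1, e2, add_assoc, ← Pi.single_add]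
        simp only [Pi.add_apply, Pi.single_eq_of_ne h.ik.symm, add_zero]
        rw [show (u i - 1) * (c * u k) * u l + (u i - 1) * -(c * u l) * u k = 0 by ring]
        simp
  conv_lhs => rw [Y, mul_assoc, hc.eq]
  rw [Y]
  have h3 := RR_comm' i b l k l ((u i - 1) * -(d * u l)) ((u i - 1) * (d * u b))
    ((u i - 1) * -(c * u l)) ((u i - 1) * (c * u k))
  rw [← h3.eq]
  group

lemma Y_A2b {i b k l : Fin n} (h : D4 i b k l) (u : Fin n → R) (c r : R) :
    sx k b r * Y u i k l c * (sx k b r)⁻¹ = Y (u + Pi.single k (r * u b)) i k l c *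
      Y (u + Pi.single k (r * u b)) i b l (-(c * r)) := by
  rw [Y_D h, Y_conj, sx_col h.ik h.ij h.jk.symm]
  simp only [RR_conj, comm_conj (sx_comm h.ij.symm h.kl _ _), sx_conj h.ik h.jk.symm h.ij]
  simp only [Pi.add_apply, Pi.single_eq_of_ne h.ik, Pi.single_eq_same,
    Pi.single_eq_of_ne h.kl.symm, Pi.single_eq_of_ne h.jk, add_zero]
  have key : ∀ x y z w : R, sx i k x * sx i b y * sx i l (z + w) =
      RR i k l x z * RR i b l y w := by
    intro x y z w
    rw [RR, RR, sx_add, mul_assoc (sx i k x), mul_assoc (sx i k x), ← mul_assoc (sx i b y),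
      (comm_row i b l y z).eq]
    simp only [mul_assoc]
  rw [← key, ← key]
  have key2 : ∀ x y z x' y' z' : R, x = x' → y = y' → z = z' → sx i k x * sx i b y * sx i l z =
    sx i k x' * sx i b y' * sx i l z' := by rintro x y z _ _ _ rfl rfl rfl; rfl
  congr 1
  · congr 2
    apply key2 <;> ring
  · apply key2 <;> ring

/-- The subgroup attached to a vector `u`. -/
def NN (u : Fin n → R) : Subgroup (SteinbergGroup n R) :=
  Subgroup.closure {y | ∃ i k l c, i ≠ k ∧ i ≠ l ∧ k ≠ l ∧ y = Y u i k l c}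

lemma Y_mem {u : Fin n → R} {i k l : Fin n} (hik : i ≠ k) (hil : i ≠ l) (hkl : k ≠ l) (c : R) :
    Y u i k l c ∈ NN u := Subgroup.subset_closure ⟨i, k, l, c, hik, hil, hkl, rfl⟩

lemma Y_indep' {i j k l : Fin n} (hik : i ≠ k) (hil : i ≠ l) (hjk : j ≠ k) (hjl : j ≠ l)
    (hkl : k ≠ l) (u : Fin n → R) (c : R) : Y u i k l c = Y u j k l c := by
  by_cases h : i = j
  · rw [h]
  · exact Y_indep ⟨h, hik, hil, hjk, hjl, hkl⟩ u c

lemma ex4 (hn : 4 ≤ n) (a b c : Fin n) : ∃ i, i ≠ a ∧ i ≠ b ∧ i ≠ c := by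
  have : ∃ i, i ∉ ({a, b, c} : Finset (Fin n)) := by
    by_contra hh
    push Not at hh
    have h1 : Finset.univ ⊆ ({a, b, c} : Finset (Fin n)) := fun x _ => hh x
    have h2 := Finset.card_le_card h1
    have h3 : ({a, b, c} : Finset (Fin n)).card ≤ 3 := Finset.card_le_three
    simp at h2
    omega
  simpa using this

lemma gen_aux (hn : 4 ≤ n) {a b i l : Fin n} (hab : a ≠ b) (r : R) (u : Fin n → R)
    (hik : i ≠ a) (hil : i ≠ l) (hkl : a ≠ l) (c : R) :
    sx a b r * Y u i a l c * (sx a b r)⁻¹ ∈ NN (u + Pi.single a (r * u b)) := by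
  obtain ⟨m, hm1, hm2, hm3⟩ := ex4 hn a b l
  rw [Y_indep' hik hil hm1 hm3 hkl]
  by_cases hbl : b = l
  · subst hbl
    rw [Y_A2a hm1 hm3 hkl]
    exact Y_mem hm1 hm3 hkl c
  · rw [Y_A2b ⟨hm2, hm1, hm3, hab.symm, hbl, hkl⟩]
    exact mul_mem (Y_mem hm1 hm3 hkl c) (Y_mem hm2 hm3 hbl _)

lemma gen_mem (hn : 4 ≤ n) {a b i k l : Fin n} (hab : a ≠ b) (r : R) (u : Fin n → R)
    (hik : i ≠ k) (hil : i ≠ l) (hkl : k ≠ l) (c : R) :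
    sx a b r * Y u i k l c * (sx a b r)⁻¹ ∈ NN (u + Pi.single a (r * u b)) := by
  by_cases hak : a = k
  · subst hak; exact gen_aux hn hab r u hik hil hkl c
  by_cases hal : a = l
  · subst hal; rw [Y_swap]; exact gen_aux hn hab r u hil hik hkl.symm _
  by_cases hb : b = k ∨ b = l
  · obtain ⟨m, hm1, hm2, hm3⟩ := ex4 hn a k l
    rw [Y_indep' hik hil hm2 hm3 hkl]
    have hmb : m ≠ b := by rcases hb with rfl | rfl <;> assumption
    rw [Y_A1 hm2 hm3 hm1 hmb hab hak hal]
    exact Y_mem hm2 hm3 hkl c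
  · push Not at hb
    rw [Y_indep' hik hil hb.1 hb.2 hkl, Y_C ⟨hab.symm, hb.1, hb.2, hak, hal, hkl⟩]
    exact Y_mem hb.1 hb.2 hkl c

lemma gen_mem' (hn : 4 ≤ n) {a b : Fin n} (hab : a ≠ b) (r : R) (u : Fin n → R)
    (y : SteinbergGroup n R) (hy : y ∈ NN u) :
    sx a b r * y * (sx a b r)⁻¹ ∈ NN (u + Pi.single a (r * u b)) := by
  have : NN u ≤ (NN (u + Pi.single a (r * u b))).comap (MulAut.conj (sx a b r)).toMonoidHom := by
    rw [NN, Subgroup.closure_le]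
    rintro _ ⟨i, k, l, c, hik, hil, hkl, rfl⟩
    exact gen_mem hn hab r u hik hil hkl c
  exact this hy

lemma Y_e1 {i k l : Fin n} (hik : i ≠ k) (hil : i ≠ l) (hkl : k ≠ l) (c : R) :
    Y (Pi.single k 1) i k l c = sx k l c := by
  have h := sx_mul hik.symm hil hkl 1 c
  rw [Y, col_single]
  simp only [Pi.single_eq_same, Pi.single_eq_of_ne hik, Pi.single_eq_of_ne hkl.symm, RR, mul_zero,
    neg_zero, sx_zero, one_mul, mul_one, zero_sub, neg_mul, sx_neg]
  rw [h]; simp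

lemma NN_e (hn : 4 ≤ n) (m : Fin n) (y : SteinbergGroup n R) :
    y ∈ NN (Pi.single m 1) ↔ ∃ w : Fin n → R, w m = 0 ∧ y = row m w := by
  constructor
  · intro hy
    let T : Subgroup (SteinbergGroup n R) :=
      { carrier := {y | ∃ w : Fin n → R, w m = 0 ∧ y = row m w}
        mul_mem' := by
          rintro _ _ ⟨w, hw, rfl⟩ ⟨w', hw', rfl⟩
          exact ⟨w + w', by simp [hw, hw'], (row_add _ _ _).symm⟩
        one_mem' := ⟨0, rfl, (row_zero _).symm⟩
        inv_mem' := by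
          rintro _ ⟨w, hw, rfl⟩
          exact ⟨-w, by simp [hw], (row_neg _ _).symm⟩ }
    have : NN (Pi.single m 1) ≤ T := by
      rw [NN, Subgroup.closure_le]
      rintro _ ⟨i, k, l, c, hik, hil, hkl, rfl⟩
      by_cases hk : k = m
      · subst hk
        refine ⟨Pi.single l c, by simp [hkl], ?_⟩
        rw [Y_e1 hik hil hkl, row_single]
      by_cases hl : l = m
      · subst hl
        refine ⟨Pi.single k (-c), by simp [Ne.symm hk], ?_⟩
        rw [Y_swap, Y_e1 hil hik hkl.symm, row_single]
      · refine ⟨0, rfl, ?_⟩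
        rw [Y, row_zero]
        simp [Pi.single_eq_of_ne hk, Pi.single_eq_of_ne hl, RR_zero]
    exact this hy
  · rintro ⟨w, hw, rfl⟩
    refine vec_ind (P := fun w => row m w ∈ NN (Pi.single m 1)) (by rw [row_zero]; exact one_mem _) ?_ w ?_
    · intro p q hp hq; rw [row_add]; exact mul_mem hp hq
    · intro l
      rw [row_single]
      by_cases hl : l = m
      · subst hl; rw [sx_self]; exact one_mem _
      · obtain ⟨i, hi1, hi2, -⟩ := ex4 hn m l l
        rw [← Y_e1 hi1 hi2 (Ne.symm hl)]
        exact Y_mem hi1 hi2 (Ne.symm hl) _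
end C
end Stb

namespace Stb
open Matrix
section D
variable {n : ℕ} {R : Type} [CommRing R]

lemma st_ind {P : SteinbergGroup n R → Prop} (h1 : P 1) (hm : ∀ g h, P g → P h → P (g * h))
    (hs : ∀ (i j : Fin n), i ≠ j → ∀ r : R, P (sx i j r)) (g : SteinbergGroup n R) : P g := by
  have hg : g ∈ Subgroup.closure (Set.range
    (PresentedGroup.of : StGen n R → SteinbergGroup n R)) := by
    rw [PresentedGroup.closure_range_of]; trivial
  induction hg using Subgroup.closure_induction'' with
  | mem x hx =>
    obtain ⟨⟨⟨⟨i, j⟩, hij⟩, r⟩, rfl⟩ := hx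
    have := hs i j hij r
    rwa [sx_ne hij] at this
  | inv_mem x hx =>
    obtain ⟨⟨⟨⟨i, j⟩, hij⟩, r⟩, rfl⟩ := hx
    have := hs i j hij (-r)
    rwa [sx_neg, sx_ne hij] at this
  | one => exact h1
  | mul x y _ _ hx hy => exact hm _ _ hx hy

lemma exists_hom {G : Type*} [Group G] (f : Fin n → Fin n → R → G)
    (ha : ∀ i j, i ≠ j → ∀ r s, f i j r * f i j s = f i j (r + s))
    (hc : ∀ i j h k, i ≠ j → h ≠ k → j ≠ h → i ≠ k → ∀ r s, f i j r * f h k s = f h k s * f i j r)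
    (hm : ∀ i j k, i ≠ j → j ≠ k → i ≠ k → ∀ r s, f i j r * f j k s =
      f i k (r * s) * f j k s * f i j r) :
    ∃ F : SteinbergGroup n R →* G, ∀ i j, i ≠ j → ∀ r, F (sx i j r) = f i j r := by
  have key : ∀ r ∈ {w | StRels n R w},
      FreeGroup.lift (fun x : StGen n R => f x.1.1.1 x.1.1.2 x.2) r = 1 := by
    rintro _ (⟨i, j, hij, r, s⟩ | ⟨i, j, h, k, hij, hhk, hjh, hik, r, s⟩ |
      ⟨i, j, k, hij, hjk, hik, r, s⟩)
    · simp only [map_mul, map_inv, FreeGroup.lift_apply_of]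
      rw [ha i j hij]; simp
    · rw [map_commutatorElement, commutatorElement_eq_one_iff_mul_comm]
      simp only [FreeGroup.lift_apply_of]
      exact hc i j h k hij hhk hjh hik r s
    · rw [map_mul, map_commutatorElement, map_inv, mul_inv_eq_one, commutatorElement_def]
      simp only [FreeGroup.lift_apply_of]
      rw [hm i j k hij hjk hik]; group
  refine ⟨PresentedGroup.toGroup key, fun i j hij r => ?_⟩
  rw [sx_ne hij, stx, PresentedGroup.toGroup.of]

lemma exists_tau : ∃ F : SteinbergGroup n R →* SteinbergGroup n R,
    ∀ i j, i ≠ j → ∀ r, F (sx i j r) = sx j i (-r) := by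
  apply exists_hom
  · intro i j _ r s; rw [neg_add, sx_add]
  · intro i j h k _ _ hjh hik r s
    exact (sx_comm hik hjh _ _).eq
  · intro i j k hij hjk hik r s
    have := sx_mul hjk.symm hij.symm hik.symm (-s) (-r)
    rw [mul_assoc, this]
    rw [sx_neg k i (r * s), show -s * -r = r * s by ring]; group

noncomputable def tau : SteinbergGroup n R →* SteinbergGroup n R := exists_tau.choose

lemma tau_sx (i j : Fin n) (r : R) : tau (sx i j r) = sx j i (-r) := by
  by_cases h : i = j
  · subst h; simp [sx_self]
  · exact exists_tau.choose_spec i j h r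

lemma tau_row (i : Fin n) (w : Fin n → R) : tau (row i w) = col i (-w) := by
  refine vec_ind (P := fun w => tau (row i w) = col i (-w)) (by simp [row_zero, col_zero]) ?_ w ?_
  · intro p q hp hq; rw [row_add, map_mul, hp, hq, neg_add, col_add]
  · intro k; rw [row_single, tau_sx, ← Pi.single_neg, col_single]

variable (φ : SteinbergGroup n R →* Matrix.GeneralLinearGroup (Fin n) R)

def Good : Prop := ∀ (i j : Fin n) (hij : i ≠ j) (r : R),
      (φ (stx n R i j hij r) : Matrix (Fin n) (Fin n) R) = 1 + Matrix.single i j r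

def ma (g : SteinbergGroup n R) : Matrix (Fin n) (Fin n) R := (φ g).val

lemma ma_mul (g h : SteinbergGroup n R) : ma φ (g * h) = ma φ g * ma φ h := by simp [ma]
lemma ma_one : ma φ 1 = 1 := by simp [ma]
lemma ma_inv (g : SteinbergGroup n R) : ma φ g * ma φ g⁻¹ = 1 := by rw [← ma_mul]; simp [ma_one]
lemma ma_inv' (g : SteinbergGroup n R) : ma φ g⁻¹ * ma φ g = 1 := by rw [← ma_mul]; simp [ma_one]

variable {φ} (hφ : Good φ)
include hφ

lemma ma_sx {i j : Fin n} (hij : i ≠ j) (r : R) : ma φ (sx i j r) = 1 + Matrix.single i j r := by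
  rw [sx_ne hij]; exact hφ i j hij r

lemma sx_mulVec {i j : Fin n} (hij : i ≠ j) (r : R) (u : Fin n → R) :
    ma φ (sx i j r) *ᵥ u = u + Pi.single i (r * u j) := by
  rw [ma_sx hφ hij, add_mulVec, one_mulVec]
  congr 1
  funext m
  by_cases hm : m = i
  · subst hm; simp [single_mulVec]
  · simp [single_mulVec, hm]

lemma vecMul_sx {i j : Fin n} (hij : i ≠ j) (r : R) (u : Fin n → R) :
    u ᵥ* ma φ (sx i j r) = u + Pi.single j (u i * r) := by
  rw [ma_sx hφ hij, vecMul_add, vecMul_one]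
  congr 1
  funext m
  simp only [vecMul, dotProduct, Matrix.single, of_apply, Pi.single_apply]
  by_cases hm : j = m
  · subst hm; simp
  · simp [hm, Ne.symm hm]

lemma conj_NN (hn : 4 ≤ n) (g : SteinbergGroup n R) : ∀ (u : Fin n → R) (y : SteinbergGroup n R),
    y ∈ NN u → g * y * g⁻¹ ∈ NN (ma φ g *ᵥ u) := by
  refine st_ind (P := fun g => ∀ (u : Fin n → R) (y : SteinbergGroup n R),
    y ∈ NN u → g * y * g⁻¹ ∈ NN (ma φ g *ᵥ u)) ?_ ?_ ?_ g
  · intro u y hy; simpa [ma_one] using hy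
  · intro g h hg hh u y hy
    have := hg _ _ (hh u y hy)
    rw [ma_mul, ← mulVec_mulVec]
    convert this using 1; group
  · intro i j hij r u y hy
    rw [sx_mulVec hφ hij]
    exact gen_mem' hn hij r u y hy

lemma ma_row (m : Fin n) (w : Fin n → R) (hw : w m = 0) :
    ma φ (row m w) = 1 + vecMulVec (Pi.single m 1) w := by
  refine (vec_ind (P := fun w => w m = 0 ∧ ma φ (row m w) = 1 + vecMulVec (Pi.single m 1) w)
    ?_ ?_ w ?_).2
  · simp [row_zero, ma_one]
  · rintro p q ⟨hp, hp'⟩ ⟨hq, hq'⟩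
    refine ⟨by simp [hp, hq], ?_⟩
    have h0 : vecMulVec (Pi.single m 1) p * vecMulVec (Pi.single m 1) q = 0 := by
      rw [vecMulVec_mul_vecMulVec]; simp [hp]
    rw [row_add, ma_mul, hp', hq', vecMulVec_add, add_mul, mul_add, mul_add, h0, one_mul, one_mul,
      mul_one]
    abel
  · intro k
    by_cases hk : k = m
    · subst hk; simp [hw, row_zero, ma_one]
    · refine ⟨by simp [Ne.symm hk], ?_⟩
      rw [row_single, ma_sx hφ (Ne.symm hk)]
      congr 1
      ext a b
      simp only [Matrix.single, of_apply, vecMulVec_apply, Pi.single_apply]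
      by_cases h1 : m = a <;> by_cases h2 : k = b <;> simp [h1, h2, eq_comm]

lemma row_conj (hn : 4 ≤ n) (g : SteinbergGroup n R) (i j : Fin n)
    (hg : ma φ g *ᵥ Pi.single i 1 = Pi.single j 1) (w : Fin n → R) (hw : w i = 0) :
    g * row i w * g⁻¹ = row j (w ᵥ* ma φ g⁻¹) := by
  have h1 := conj_NN hφ hn g _ _ ((NN_e hn i (row i w)).mpr ⟨w, hw, rfl⟩)
  rw [hg, NN_e hn] at h1
  obtain ⟨w', hw', h2⟩ := h1
  rw [h2]
  have h3 : ma φ (g * row i w * g⁻¹) = ma φ (row j w') := by rw [h2]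
  rw [ma_mul, ma_mul, ma_row hφ _ _ hw, ma_row hφ _ _ hw', mul_add, add_mul, mul_one, ma_inv,
    mul_vecMulVec, vecMulVec_mul, hg] at h3
  have h4 := add_left_cancel h3
  congr 1
  funext m
  have := congrFun (congrFun h4 j) m
  simpa [vecMulVec_apply] using this.symm

lemma exists_move (hn : 4 ≤ n) (i j : Fin n) :
    ∃ g : SteinbergGroup n R, ma φ g *ᵥ Pi.single i 1 = Pi.single j 1 := by
  by_cases hij : i = j
  · subst hij; exact ⟨1, by rw [ma_one, one_mulVec]⟩
  refine ⟨sx i j (-1) * sx j i 1, ?_⟩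
  rw [ma_mul, ← mulVec_mulVec, sx_mulVec hφ (Ne.symm hij), sx_mulVec hφ hij]
  simp [hij, Ne.symm hij]
  rw [Pi.single_neg]; abel

open Classical in
omit hφ in
variable (φ) in
/-- The elements `X(u,v)`. -/
noncomputable def XX [NeZero n] (u v : Fin n → R) : SteinbergGroup n R :=
  if h : ∃ g : SteinbergGroup n R, ma φ g *ᵥ Pi.single 0 1 = u then
    h.choose * row 0 (v ᵥ* ma φ h.choose) * h.choose⁻¹ else 1

lemma XX_spec [NeZero n] (hn : 4 ≤ n) (g : SteinbergGroup n R) (i : Fin n) (v : Fin n → R)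
    (hv : (v ᵥ* ma φ g) i = 0) :
    XX φ (ma φ g *ᵥ Pi.single i 1) v = g * row i (v ᵥ* ma φ g) * g⁻¹ := by
  have h : ∃ h : SteinbergGroup n R, ma φ h *ᵥ Pi.single 0 1 = ma φ g *ᵥ Pi.single i 1 := by
    obtain ⟨k, hk⟩ := exists_move hφ hn 0 i
    exact ⟨g * k, by rw [ma_mul, ← mulVec_mulVec, hk]⟩
  rw [XX, dif_pos h]
  have hh := h.choose_spec
  generalize h.choose = k at hh ⊢
  have := row_conj hφ hn (k⁻¹ * g) i 0 (by
    rw [ma_mul, ← mulVec_mulVec, ← hh, mulVec_mulVec, ma_inv', one_mulVec]) _ hv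
  rw [_root_.mul_inv_rev, inv_inv, ma_mul, vecMul_vecMul, ← mul_assoc (ma φ g), ma_inv, one_mul] at this
  rw [← this]; group

lemma XX_e [NeZero n] (hn : 4 ≤ n) (i : Fin n) (v : Fin n → R) (hv : v i = 0) :
    XX φ (Pi.single i 1) v = row i v := by
  have := XX_spec hφ hn 1 i v (by simpa [ma_one] using hv)
  rw [ma_one, one_mulVec, vecMul_one] at this
  simpa using this

omit hφ in
variable (φ) in
def Orb [NeZero n] (u : Fin n → R) : Prop :=
  ∃ g : SteinbergGroup n R, ma φ g *ᵥ Pi.single 0 1 = u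

omit hφ in
lemma orth_e [NeZero n] {g : SteinbergGroup n R} {i : Fin n} {v : Fin n → R}
    (h : dotProduct (ma φ g *ᵥ Pi.single i 1) v = 0) : (v ᵥ* ma φ g) i = 0 := by
  rw [dotProduct_comm, dotProduct_mulVec] at h
  simpa using h

lemma XX_add [NeZero n] (hn : 4 ≤ n) {u v w : Fin n → R} (hu : Orb φ u) (hv : dotProduct u v = 0)
    (hw : dotProduct u w = 0) : XX φ u (v + w) = XX φ u v * XX φ u w := by
  obtain ⟨g, rfl⟩ := hu
  rw [XX_spec hφ hn g 0 _ (orth_e hv), XX_spec hφ hn g 0 _ (orth_e hw),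
    XX_spec hφ hn g 0 _ (orth_e (by rw [dotProduct_add, hv, hw, add_zero])), add_vecMul, row_add]
  group

lemma XX_equiv [NeZero n] (hn : 4 ≤ n) {u v : Fin n → R} (hu : Orb φ u) (hv : dotProduct u v = 0)
    (g : SteinbergGroup n R) : g * XX φ u v * g⁻¹ = XX φ (ma φ g *ᵥ u) (v ᵥ* ma φ g⁻¹) := by
  obtain ⟨k, rfl⟩ := hu
  have e : (v ᵥ* ma φ g⁻¹) ᵥ* ma φ (g * k) = v ᵥ* ma φ k := by
    rw [vecMul_vecMul, ma_mul, ← mul_assoc, ma_inv', one_mul]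
  have := XX_spec hφ hn (g * k) 0 (v ᵥ* ma φ g⁻¹) (by rw [e]; exact orth_e hv)
  rw [mulVec_mulVec, ← ma_mul, this, e, XX_spec hφ hn k 0 _ (orth_e hv)]
  group

lemma ma_XX [NeZero n] (hn : 4 ≤ n) {u v : Fin n → R} (hu : Orb φ u) (hv : dotProduct u v = 0) :
    ma φ (XX φ u v) = tMat u v := by
  obtain ⟨k, rfl⟩ := hu
  rw [XX_spec hφ hn k 0 _ (orth_e hv), ma_mul, ma_mul, ma_row hφ _ _ (orth_e hv), mul_add, add_mul,
    mul_one, ma_inv, mul_vecMulVec, vecMulVec_mul, vecMul_vecMul, ma_inv, vecMul_one, tMat]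

lemma ma_tau (g : SteinbergGroup n R) : ma φ (tau g) = (ma φ g⁻¹)ᵀ := by
  refine st_ind (P := fun g => ma φ (tau g) = (ma φ g⁻¹)ᵀ) ?_ ?_ ?_ g
  · simp [ma_one]
  · intro g h hg hh
    rw [map_mul, ma_mul, hg, hh, _root_.mul_inv_rev, ma_mul, transpose_mul]
  · intro i j hij r
    rw [tau_sx, ← sx_neg, ma_sx hφ hij, ma_sx hφ hij.symm, transpose_add, transpose_one,
      transpose_single]

lemma Elem_iff (M : Matrix.GeneralLinearGroup (Fin n) R) : M ∈ Elem n R ↔ ∃ g, φ g = M := by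
  constructor
  · intro h
    have : Elem n R ≤ φ.range := by
      rw [Elem, Subgroup.closure_le]
      rintro M ⟨i, j, hij, r, h⟩
      exact ⟨sx i j r, Units.ext (by rw [h]; exact ma_sx hφ hij r)⟩
    exact this h
  · rintro ⟨g, rfl⟩
    refine st_ind (P := fun g => φ g ∈ Elem n R) ?_ ?_ ?_ g
    · rw [map_one]; exact one_mem _
    · intro g h hg hh; rw [map_mul]; exact mul_mem hg hh
    · intro i j hij r
      exact Subgroup.subset_closure ⟨i, j, hij, r, ma_sx hφ hij r⟩

lemma Ecol_iff [NeZero n] (u : Fin n → R) : u ∈ Ecol n R ↔ Orb φ u := by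
  constructor
  · rintro ⟨M, hM, rfl⟩
    obtain ⟨g, rfl⟩ := (Elem_iff hφ M).mp hM
    exact ⟨g, by rw [mulVec_single_one]; rfl⟩
  · rintro ⟨g, rfl⟩
    exact ⟨φ g, (Elem_iff hφ _).mpr ⟨g, rfl⟩, by rw [mulVec_single_one]; rfl⟩
end D
end Stb

namespace Stb
open Matrix
set_option linter.unusedSectionVars false
section E
variable {n : ℕ} [NeZero n] {R : Type} [CommRing R]

lemma tMat_mulVec (u v x : Fin n → R) : tMat u v *ᵥ x = x + dotProduct v x • u := by
  rw [tMat, add_mulVec, one_mulVec, vecMulVec_mulVec]; simp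
lemma tMat_mulVec' (u v x : Fin n → R) : (1 - vecMulVec v u) *ᵥ x = x - dotProduct u x • v := by
  rw [sub_mulVec, one_mulVec, vecMulVec_mulVec]; simp

def FP (I : Ideal R) (u v : Fin n → R) : Prop :=
  u ∈ Ecol n R ∧ (∀ i, v i ∈ I) ∧ dotProduct u v = 0
def SP (I : Ideal R) (u v : Fin n → R) : Prop :=
  (∀ i, u i ∈ I) ∧ v ∈ Ecol n R ∧ dotProduct u v = 0

open Classical in
noncomputable def Fs (I : Ideal R) (u v : Fin n → R) : StStar n R I :=
  if h : FP I u v then PresentedGroup.of (StarGen.F u v h.1 h.2.1 h.2.2) else 1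
open Classical in
noncomputable def Ss (I : Ideal R) (u v : Fin n → R) : StStar n R I :=
  if h : SP I u v then PresentedGroup.of (StarGen.S u v h.1 h.2.1 h.2.2) else 1

lemma Fs_pos {I : Ideal R} {u v : Fin n → R} (h : FP I u v) :
    Fs I u v = PresentedGroup.of (StarGen.F u v h.1 h.2.1 h.2.2) := by rw [Fs, dif_pos h]
lemma Ss_pos {I : Ideal R} {u v : Fin n → R} (h : SP I u v) :
    Ss I u v = PresentedGroup.of (StarGen.S u v h.1 h.2.1 h.2.2) := by rw [Ss, dif_pos h]

lemma FP_add {I : Ideal R} {u v w : Fin n → R} (h : FP I u v) (h' : FP I u w) : FP I u (v + w) :=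
  ⟨h.1, fun i => I.add_mem (h.2.1 i) (h'.2.1 i), by rw [dotProduct_add, h.2.2, h'.2.2, add_zero]⟩
lemma SP_add {I : Ideal R} {u v w : Fin n → R} (h : SP I u v) (h' : SP I w v) : SP I (u + w) v :=
  ⟨fun i => I.add_mem (h.1 i) (h'.1 i), h.2.1, by rw [add_dotProduct, h.2.2, h'.2.2, add_zero]⟩

lemma Fs_add {I : Ideal R} {u v w : Fin n → R} (h : FP I u v) (h' : FP I u w) :
    Fs I u (v + w) = Fs I u v * Fs I u w := by
  have h'' := FP_add h h'
  have := PresentedGroup.one_of_mem (rels := {w | StarRels n R I w})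
    (StarRels.addF u v w h.1 h.2.1 h'.2.1 h''.2.1 h.2.2 h'.2.2 h''.2.2)
  rw [map_mul, map_mul, map_inv, mul_inv_eq_one] at this
  rw [Fs_pos h, Fs_pos h', Fs_pos h'']
  exact this.symm

lemma Ss_add {I : Ideal R} {u v w : Fin n → R} (h : SP I u v) (h' : SP I w v) :
    Ss I (u + w) v = Ss I u v * Ss I w v := by
  have h'' := SP_add h h'
  have := PresentedGroup.one_of_mem (rels := {w | StarRels n R I w})
    (StarRels.addS u w v h.1 h'.1 h''.1 h.2.1 h.2.2 h'.2.2 h''.2.2)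
  rw [map_mul, map_mul, map_inv, mul_inv_eq_one] at this
  rw [Ss_pos h, Ss_pos h', Ss_pos h'']
  exact this.symm

lemma FP_zero {I : Ideal R} {u : Fin n → R} (h : u ∈ Ecol n R) : FP I u 0 :=
  ⟨h, fun i => I.zero_mem, by simp⟩
lemma SP_zero {I : Ideal R} {u : Fin n → R} (h : u ∈ Ecol n R) : SP I 0 u :=
  ⟨fun i => I.zero_mem, h, by simp⟩
lemma Fs_zero (I : Ideal R) {u : Fin n → R} (h : u ∈ Ecol n R) : Fs I u 0 = 1 := by
  have := Fs_add (FP_zero (I := I) h) (FP_zero h)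
  simpa using this
lemma Ss_zero (I : Ideal R) {u : Fin n → R} (h : u ∈ Ecol n R) : Ss I 0 u = 1 := by
  have := Ss_add (SP_zero (I := I) h) (SP_zero h)
  simpa using this

variable {φ : SteinbergGroup n R →* Matrix.GeneralLinearGroup (Fin n) R}

lemma dot_inv (g : SteinbergGroup n R) (v u : Fin n → R) :
    dotProduct (v ᵥ* ma φ g⁻¹) (ma φ g *ᵥ u) = dotProduct v u := by
  rw [dotProduct_mulVec, vecMul_vecMul, ma_inv', vecMul_one]
lemma dot_inv' (g : SteinbergGroup n R) (v u : Fin n → R) :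
    dotProduct (ma φ g *ᵥ u) (v ᵥ* ma φ g⁻¹) = dotProduct u v := by
  rw [dotProduct_comm, dot_inv, dotProduct_comm]

lemma mem_mulVec {I : Ideal R} (M : Matrix (Fin n) (Fin n) R) {u : Fin n → R} (h : ∀ i, u i ∈ I)
    (i : Fin n) : (M *ᵥ u) i ∈ I := by
  rw [mulVec, dotProduct]
  exact I.sum_mem fun j _ => I.mul_mem_left _ (h j)
lemma mem_vecMul {I : Ideal R} (M : Matrix (Fin n) (Fin n) R) {u : Fin n → R} (h : ∀ i, u i ∈ I)
    (i : Fin n) : (u ᵥ* M) i ∈ I := by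
  rw [vecMul, dotProduct]
  exact I.sum_mem fun j _ => I.mul_mem_right _ (h j)

lemma tau_tau (g : SteinbergGroup n R) : tau (tau g) = g := by
  refine st_ind (P := fun g => tau (tau g) = g) (by simp) ?_ ?_ g
  · intro g h hg hh; rw [map_mul, map_mul, hg, hh]
  · intro i j _ r; rw [tau_sx, tau_sx, neg_neg]

variable (hφ : Good φ) (hn : 4 ≤ n)
include hφ

lemma star_vec (g : SteinbergGroup n R) (v : Fin n → R) :
    v ᵥ* ma φ g⁻¹ = ma φ (tau g) *ᵥ v := by
  rw [ma_tau hφ, mulVec_transpose]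

lemma Ecol_act (g : SteinbergGroup n R) {u : Fin n → R} (h : u ∈ Ecol n R) :
    ma φ g *ᵥ u ∈ Ecol n R := by
  rw [Ecol_iff hφ] at h ⊢
  obtain ⟨k, rfl⟩ := h
  exact ⟨g * k, by rw [ma_mul, mulVec_mulVec]⟩

lemma Ecol_star (g : SteinbergGroup n R) {u : Fin n → R} (h : u ∈ Ecol n R) :
    u ᵥ* ma φ g⁻¹ ∈ Ecol n R := by
  rw [star_vec hφ]; exact Ecol_act hφ _ h

lemma FP_act {I : Ideal R} {u v : Fin n → R} (g : SteinbergGroup n R) (h : FP I u v) :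
    FP I (ma φ g *ᵥ u) (v ᵥ* ma φ g⁻¹) :=
  ⟨Ecol_act hφ g h.1, mem_vecMul _ h.2.1, by rw [dot_inv', h.2.2]⟩
lemma SP_act {I : Ideal R} {u v : Fin n → R} (g : SteinbergGroup n R) (h : SP I u v) :
    SP I (ma φ g *ᵥ u) (v ᵥ* ma φ g⁻¹) :=
  ⟨mem_mulVec _ h.1, Ecol_star hφ g h.2.1, by rw [dot_inv', h.2.2]⟩

include hn

lemma Ecol_e (i : Fin n) : (Pi.single i 1 : Fin n → R) ∈ Ecol n R := by
  rw [Ecol_iff hφ]; exact exists_move hφ hn 0 i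

lemma one_ne : (0 : Fin n) ≠ 1 := by
  intro h
  have := congrArg Fin.val h
  have h1 : ((1 : Fin n) : ℕ) = 1 % n := rfl
  rw [h1, Nat.mod_eq_of_lt (by omega)] at this
  simp at this

lemma FP_sx {I : Ideal R} {i j : Fin n} (hij : i ≠ j) {s : R} (hs : s ∈ I) :
    FP I (Pi.single i 1) (Pi.single j s) :=
  ⟨Ecol_e hφ hn i, fun k => by
    rw [Pi.single_apply]; split_ifs; exacts [hs, I.zero_mem], by simp [hij]⟩
lemma SP_sx {I : Ideal R} {i j : Fin n} (hij : i ≠ j) {s : R} (hs : s ∈ I) :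
    SP I (Pi.single i s) (Pi.single j 1) :=
  ⟨fun k => by rw [Pi.single_apply]; split_ifs; exacts [hs, I.zero_mem], Ecol_e hφ hn j,
    by simp [hij]⟩

lemma FP4 {I : Ideal R} (g : SteinbergGroup n R) {a : R} (ha : a ∈ I) :
    FP I (ma φ g *ᵥ Pi.single 0 1) (a • (Pi.single 1 1 ᵥ* ma φ g⁻¹)) := by
  have := FP_act hφ g (FP_sx hφ hn (one_ne hφ hn) ha)
  rwa [show (Pi.single 1 a : Fin n → R) = a • Pi.single 1 1 by rw [← Pi.single_smul]; simp,
    smul_vecMul] at this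
lemma SP4 {I : Ideal R} (g : SteinbergGroup n R) {a : R} (ha : a ∈ I) :
    SP I (a • (ma φ g *ᵥ Pi.single 0 1)) (Pi.single 1 1 ᵥ* ma φ g⁻¹) := by
  have := SP_act hφ g (SP_sx hφ hn (one_ne hφ hn) ha)
  rwa [show (Pi.single 0 a : Fin n → R) = a • Pi.single 0 1 by rw [← Pi.single_smul]; simp,
    mulVec_smul] at this

omit hn in
lemma XX_zero (hn : 4 ≤ n) {u : Fin n → R} (hu : Orb φ u) : XX φ u 0 = 1 := by
  have := XX_add hφ hn hu (dotProduct_zero u) (dotProduct_zero u)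
  simpa using this
lemma XX_neg {u v : Fin n → R} (hu : Orb φ u) (h : dotProduct u v = 0) :
    XX φ u (-v) = (XX φ u v)⁻¹ := by
  rw [eq_inv_iff_mul_eq_one, ← XX_add hφ hn hu (by simp [h]) h]; simp [XX_zero hφ hn hu]

lemma FP3 {I : Ideal R} {u v u' v' : Fin n → R} (h : FP I u v) (h' : FP I u' v') :
    FP I (u' + dotProduct v u' • u) (v' - dotProduct u v' • v) := by
  have hu : Orb φ u := (Ecol_iff hφ _).mp h.1
  have := FP_act hφ (XX φ u v) h'
  rw [← XX_neg hφ hn hu h.2.2, ma_XX hφ hn hu h.2.2, ma_XX hφ hn hu (by simp [h.2.2]),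
    tMat_mulVec] at this
  rw [show v' ᵥ* tMat u (-v) = v' - dotProduct u v' • v by
    rw [tMat, vecMul_add, vecMul_one, vecMul_vecMulVec, dotProduct_comm]; simp [sub_eq_add_neg]] at this
  exact this

lemma Fs_conj {I : Ideal R} {u v u' v' : Fin n → R} (h : FP I u v) (h' : FP I u' v') :
    Fs I u v * Fs I u' v' * (Fs I u v)⁻¹ =
      Fs I (u' + dotProduct v u' • u) (v' - dotProduct u v' • v) := by
  have h'' := FP3 hφ hn h h'
  rw [← tMat_mulVec, ← tMat_mulVec'] at h'' ⊢
  have := PresentedGroup.one_of_mem (rels := {w | StarRels n R I w})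
    (StarRels.conjF u v u' v' h.1 h.2.1 h.2.2 h'.1 h'.2.1 h'.2.2 h''.1 h''.2.1 h''.2.2)
  rw [map_mul, map_mul, map_mul, map_inv, map_inv, mul_inv_eq_one] at this
  rw [Fs_pos h, Fs_pos h', Fs_pos h'']
  exact this

omit hn hφ in
lemma colM_eq (g : SteinbergGroup n R) (i : Fin n) : colM (φ g) i = ma φ g *ᵥ Pi.single i 1 := by
  rw [mulVec_single_one]; rfl
omit hn hφ in
lemma starCol_eq (g : SteinbergGroup n R) (i : Fin n) :
    starCol (φ g) i = Pi.single i 1 ᵥ* ma φ g⁻¹ := by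
  rw [single_one_vecMul, ma, map_inv]; rfl

lemma Fs_Ss {I : Ideal R} (g : SteinbergGroup n R) {a : R} (ha : a ∈ I) :
    Fs I (ma φ g *ᵥ Pi.single 0 1) (a • (Pi.single 1 1 ᵥ* ma φ g⁻¹)) =
    Ss I (a • (ma φ g *ᵥ Pi.single 0 1)) (Pi.single 1 1 ᵥ* ma φ g⁻¹) := by
  have h := FP4 hφ hn g ha
  have h' := SP4 hφ hn g ha
  rw [← colM_eq, ← starCol_eq] at *
  have := PresentedGroup.one_of_mem (rels := {w | StarRels n R I w})
    (StarRels.coinc (φ g) ((Elem_iff hφ _).mpr ⟨g, rfl⟩) a ha h.1 h.2.1 h.2.2 h'.1 h'.2.1 h'.2.2)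
  rw [map_mul, map_inv, mul_inv_eq_one] at this
  rw [Fs_pos h, Ss_pos h']
  exact this

lemma exists_star_hom (I : Ideal R) {G : Type*} [Group G] (f s : (Fin n → R) → (Fin n → R) → G)
    (r1 : ∀ u v w, FP I u v → FP I u w → f u (v + w) = f u v * f u w)
    (r2 : ∀ u w v, SP I u v → SP I w v → s (u + w) v = s u v * s w v)
    (r3 : ∀ u v u' v', FP I u v → FP I u' v' → f u v * f u' v' * (f u v)⁻¹ =
      f (u' + dotProduct v u' • u) (v' - dotProduct u v' • v))
    (r4 : ∀ (g : SteinbergGroup n R) (a : R), a ∈ I →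
      f (ma φ g *ᵥ Pi.single 0 1) (a • (Pi.single 1 1 ᵥ* ma φ g⁻¹)) =
      s (a • (ma φ g *ᵥ Pi.single 0 1)) (Pi.single 1 1 ᵥ* ma φ g⁻¹)) :
    ∃ H : StStar n R I →* G, (∀ u v, FP I u v → H (Fs I u v) = f u v) ∧
      (∀ u v, SP I u v → H (Ss I u v) = s u v) := by
  let k : StarGen n R I → G := fun x => match x with
    | StarGen.F u v _ _ _ => f u v
    | StarGen.S u v _ _ _ => s u v
  have key : ∀ r ∈ {w | StarRels n R I w}, FreeGroup.lift k r = 1 := by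
    rintro _ (⟨u, v, w, hu, hv, hw, hvw, o1, o2, o3⟩ | ⟨u, w, v, hu, hw, huw, hv, o1, o2, o3⟩ |
      ⟨u, v, u', v', hu, hv, o1, hu', hv', o2, hu'', hv'', o3⟩ |
      ⟨M, hM, a, ha, h1, h2, h3, h4, h5, h6⟩)
    · simp only [map_mul, map_inv, FreeGroup.lift_apply_of, mul_inv_eq_one]
      exact (r1 u v w ⟨hu, hv, o1⟩ ⟨hu, hw, o2⟩).symm
    · simp only [map_mul, map_inv, FreeGroup.lift_apply_of, mul_inv_eq_one]
      exact (r2 u w v ⟨hu, hv, o1⟩ ⟨hw, hv, o2⟩).symm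
    · simp only [map_mul, map_inv, FreeGroup.lift_apply_of, mul_inv_eq_one]
      have := r3 u v u' v' ⟨hu, hv, o1⟩ ⟨hu', hv', o2⟩
      rw [← tMat_mulVec, ← tMat_mulVec'] at this
      exact this
    · simp only [map_mul, map_inv, FreeGroup.lift_apply_of, mul_inv_eq_one]
      obtain ⟨g, rfl⟩ := (Elem_iff hφ M).mp hM
      have := r4 g a ha
      rw [← colM_eq, ← starCol_eq] at this
      exact this
  refine ⟨PresentedGroup.toGroup key, fun u v h => ?_, fun u v h => ?_⟩
  · rw [Fs_pos h, PresentedGroup.toGroup.of]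
  · rw [Ss_pos h, PresentedGroup.toGroup.of]

omit hφ hn in
lemma star_ext {I : Ideal R} {G : Type*} [Group G] {A B : StStar n R I →* G}
    (h1 : ∀ u v, FP I u v → A (Fs I u v) = B (Fs I u v))
    (h2 : ∀ u v, SP I u v → A (Ss I u v) = B (Ss I u v)) : A = B := by
  apply PresentedGroup.ext
  rintro (⟨u, v, a, b, c⟩ | ⟨u, v, a, b, c⟩)
  · have := h1 u v ⟨a, b, c⟩
    rwa [Fs_pos ⟨a, b, c⟩] at this
  · have := h2 u v ⟨a, b, c⟩
    rwa [Ss_pos ⟨a, b, c⟩] at this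

lemma exists_theta (I : Ideal R) : ∃ H : StStar n R I →* SteinbergGroup n R,
    (∀ u v, FP I u v → H (Fs I u v) = XX φ u v) ∧
    (∀ u v, SP I u v → H (Ss I u v) = tau (XX φ v (-u))) := by
  apply exists_star_hom hφ hn
  · intro u v w h h'
    exact XX_add hφ hn ((Ecol_iff hφ _).mp h.1) h.2.2 h'.2.2
  · intro u w v h h'
    rw [neg_add, XX_add hφ hn ((Ecol_iff hφ _).mp h.2.1) _ _, map_mul]
    · rw [dotProduct_comm, neg_dotProduct, h.2.2, neg_zero]
    · rw [dotProduct_comm, neg_dotProduct, h'.2.2, neg_zero]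
  · intro u v u' v' h h'
    have hu := (Ecol_iff hφ _).mp h.1
    rw [XX_equiv hφ hn ((Ecol_iff hφ _).mp h'.1) h'.2.2, ← XX_neg hφ hn hu h.2.2,
      ma_XX hφ hn hu h.2.2, ma_XX hφ hn hu (by simp [h.2.2]), tMat_mulVec]
    congr 1
    rw [tMat, vecMul_add, vecMul_one, vecMul_vecMulVec, dotProduct_comm]; simp [sub_eq_add_neg]
  · intro g a ha
    have e1 : (a • (Pi.single 1 1 ᵥ* ma φ g⁻¹)) ᵥ* ma φ g = (Pi.single 1 a : Fin n → R) := by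
      rw [smul_vecMul, vecMul_vecMul, ma_inv', vecMul_one, ← Pi.single_smul]; simp
    have e2 : (-(a • (ma φ g *ᵥ Pi.single 0 1))) ᵥ* ma φ (tau g) = -(Pi.single 0 a : Fin n → R) := by
      rw [ma_tau hφ, vecMul_transpose, mulVec_neg, mulVec_smul, mulVec_mulVec, ma_inv', one_mulVec,
        ← Pi.single_smul]; simp
    have h01 := one_ne hφ hn
    rw [XX_spec hφ hn g 0 _ (by rw [e1]; simp [h01]), e1, star_vec hφ,
      XX_spec hφ hn (tau g) 1 _ (by rw [e2]; simp [h01.symm]), e2]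
    rw [map_mul, map_mul, map_inv, tau_tau, tau_row, neg_neg, col_single, row_single]

lemma exists_act (I : Ideal R) (g : SteinbergGroup n R) : ∃ H : StStar n R I →* StStar n R I,
    (∀ u v, FP I u v → H (Fs I u v) = Fs I (ma φ g *ᵥ u) (v ᵥ* ma φ g⁻¹)) ∧
    (∀ u v, SP I u v → H (Ss I u v) = Ss I (ma φ g *ᵥ u) (v ᵥ* ma φ g⁻¹)) := by
  apply exists_star_hom hφ hn
  · intro u v w h h'
    rw [add_vecMul, Fs_add (FP_act hφ g h) (FP_act hφ g h')]
  · intro u v w h h'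
    rw [mulVec_add, Ss_add (SP_act hφ g h) (SP_act hφ g h')]
  · intro u v u' v' h h'
    rw [Fs_conj hφ hn (FP_act hφ g h) (FP_act hφ g h'), dot_inv, dot_inv', mulVec_add, mulVec_smul,
      sub_vecMul, smul_vecMul]
  · intro k a ha
    have := Fs_Ss hφ hn (g * k) ha
    rw [_root_.mul_inv_rev, ma_mul, ma_mul, ← mulVec_mulVec, ← vecMul_vecMul] at this
    rw [smul_vecMul, mulVec_smul, this]

omit hφ hn in
variable (φ) in
open Classical in
noncomputable def act (I : Ideal R) (g : SteinbergGroup n R) : StStar n R I →* StStar n R I :=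
  if h : ∃ H : StStar n R I →* StStar n R I,
    (∀ u v, FP I u v → H (Fs I u v) = Fs I (ma φ g *ᵥ u) (v ᵥ* ma φ g⁻¹)) ∧
    (∀ u v, SP I u v → H (Ss I u v) = Ss I (ma φ g *ᵥ u) (v ᵥ* ma φ g⁻¹)) then h.choose else 1

lemma act_F {I : Ideal R} (g : SteinbergGroup n R) {u v : Fin n → R} (h : FP I u v) :
    act φ I g (Fs I u v) = Fs I (ma φ g *ᵥ u) (v ᵥ* ma φ g⁻¹) := by
  rw [act, dif_pos (exists_act hφ hn I g)]
  exact (exists_act hφ hn I g).choose_spec.1 u v h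
lemma act_S {I : Ideal R} (g : SteinbergGroup n R) {u v : Fin n → R} (h : SP I u v) :
    act φ I g (Ss I u v) = Ss I (ma φ g *ᵥ u) (v ᵥ* ma φ g⁻¹) := by
  rw [act, dif_pos (exists_act hφ hn I g)]
  exact (exists_act hφ hn I g).choose_spec.2 u v h

lemma act_one (I : Ideal R) : act φ I 1 = MonoidHom.id _ := by
  apply star_ext
  · intro u v h; rw [act_F hφ hn _ h, inv_one, ma_one, one_mulVec, vecMul_one]; rfl
  · intro u v h; rw [act_S hφ hn _ h, inv_one, ma_one, one_mulVec, vecMul_one]; rfl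
lemma act_mul (I : Ideal R) (g h : SteinbergGroup n R) :
    act φ I (g * h) = (act φ I g).comp (act φ I h) := by
  apply star_ext
  · intro u v hh
    rw [MonoidHom.comp_apply, act_F hφ hn _ hh, act_F hφ hn _ hh, act_F hφ hn _ (FP_act hφ _ hh),
      _root_.mul_inv_rev, ma_mul, ma_mul, ← mulVec_mulVec, ← vecMul_vecMul]
  · intro u v hh
    rw [MonoidHom.comp_apply, act_S hφ hn _ hh, act_S hφ hn _ hh, act_S hφ hn _ (SP_act hφ _ hh),
      _root_.mul_inv_rev, ma_mul, ma_mul, ← mulVec_mulVec, ← vecMul_vecMul]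

lemma move2 {j k : Fin n} (hjk : j ≠ k) : ∃ g : SteinbergGroup n R,
    ma φ g *ᵥ Pi.single 0 1 = Pi.single j 1 ∧ Pi.single 1 1 ᵥ* ma φ g⁻¹ = Pi.single k 1 := by
  let Q (j k : Fin n) : Prop := ∃ g : SteinbergGroup n R,
    ma φ g *ᵥ Pi.single 0 1 = Pi.single j 1 ∧ Pi.single 1 1 ᵥ* ma φ g⁻¹ = Pi.single k 1
  have q0 : Q 0 1 := ⟨1, by rw [ma_one, one_mulVec], by rw [inv_one, ma_one, vecMul_one]⟩
  have s1 : ∀ j k j' : Fin n, j ≠ k → j' ≠ k → Q j k → Q j' k := by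
    rintro j k j' hjk hjk' ⟨g, h1, h2⟩
    by_cases hj : j = j'
    · subst hj; exact ⟨g, h1, h2⟩
    refine ⟨sx j j' (-1) * sx j' j 1 * g, ?_, ?_⟩
    · rw [ma_mul, ma_mul, ← mulVec_mulVec, h1, ← mulVec_mulVec, sx_mulVec hφ (Ne.symm hj),
        sx_mulVec hφ hj]
      simp [Ne.symm hj]
      rw [Pi.single_neg]; abel
    · rw [_root_.mul_inv_rev, _root_.mul_inv_rev, ma_mul, ma_mul, ← vecMul_vecMul, h2,
        ← vecMul_vecMul, ← sx_neg, ← sx_neg, vecMul_sx hφ (Ne.symm hj), vecMul_sx hφ hj]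
      simp [hjk, hjk']
  have s2 : ∀ j k k' : Fin n, j ≠ k → j ≠ k' → Q j k → Q j k' := by
    rintro j k k' hjk hjk' ⟨g, h1, h2⟩
    by_cases hk : k = k'
    · subst hk; exact ⟨g, h1, h2⟩
    refine ⟨sx k' k 1 * sx k k' (-1) * g, ?_, ?_⟩
    · rw [ma_mul, ma_mul, ← mulVec_mulVec, h1, ← mulVec_mulVec, sx_mulVec hφ hk,
        sx_mulVec hφ (Ne.symm hk)]
      simp [hjk.symm, hjk'.symm]
    · rw [_root_.mul_inv_rev, _root_.mul_inv_rev, ma_mul, ma_mul, ← vecMul_vecMul, h2,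
        ← vecMul_vecMul, ← sx_neg, ← sx_neg, vecMul_sx hφ hk, vecMul_sx hφ (Ne.symm hk)]
      simp [Ne.symm hk]
      rw [Pi.single_neg]; abel
  obtain ⟨c, hc1, hc2, -⟩ := ex4 hn 1 k k
  exact s1 c k j hc2 hjk (s2 c 1 k hc1 hc2 (s1 0 1 c (one_ne hφ hn) hc1 q0))

lemma F_eq_S {I : Ideal R} {j k : Fin n} (hjk : j ≠ k) {s : R} (hs : s ∈ I) :
    Fs I (Pi.single j 1) (Pi.single k s) = Ss I (Pi.single j s) (Pi.single k 1) := by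
  obtain ⟨g, h1, h2⟩ := move2 hφ hn hjk
  have := Fs_Ss hφ hn g hs
  rw [h1, h2, ← Pi.single_smul, ← Pi.single_smul] at this
  simpa using this

omit hφ hn in
variable (R) in
def NF (I : Ideal R) : Subgroup (StStar n R I) :=
  Subgroup.closure {y | ∃ u v, FP I u v ∧ y = Fs I u v}

omit hφ hn in
lemma F_mem {I : Ideal R} {u v : Fin n → R} (h : FP I u v) : Fs I u v ∈ NF R I :=
  Subgroup.subset_closure ⟨u, v, h, rfl⟩

lemma NF_act {I : Ideal R} (g : SteinbergGroup n R) {y : StStar n R I} (hy : y ∈ NF R I) :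
    act φ I g y ∈ NF R I := by
  have : NF R I ≤ (NF R I).comap (act φ I g) := by
    conv_lhs => rw [NF]
    rw [Subgroup.closure_le]
    rintro _ ⟨u, v, h, rfl⟩
    rw [SetLike.mem_coe, Subgroup.mem_comap, act_F hφ hn _ h]
    exact F_mem (FP_act hφ g h)
  exact this hy

lemma S_mem {I : Ideal R} {u v : Fin n → R} (h : SP I u v) : Ss I u v ∈ NF R I := by
  obtain ⟨g', hg'⟩ := (Ecol_iff hφ _).mp h.2.1
  obtain ⟨g, rfl⟩ : ∃ g, g' = tau g := ⟨tau g', (tau_tau _).symm⟩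
  rw [← star_vec hφ] at hg'
  have hu : u = ma φ g *ᵥ (ma φ g⁻¹ *ᵥ u) := by rw [mulVec_mulVec, ma_inv, one_mulVec]
  set c := ma φ g⁻¹ *ᵥ u with hc
  have hc0 : c 0 = 0 := by
    have h2 := h.2.2
    rw [hu, ← hg', dot_inv'] at h2
    simpa using h2
  have hcI : ∀ i, c i ∈ I := mem_mulVec _ h.1
  have key : (∀ i, c i ∈ I) ∧ c 0 = 0 ∧ Ss I c (Pi.single 0 1) ∈ NF R I := by
    refine vec_ind (P := fun c => (∀ i, c i ∈ I) ∧ c 0 = 0 ∧ Ss I c (Pi.single 0 1) ∈ NF R I)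
      ?_ ?_ c ?_
    · refine ⟨fun i => I.zero_mem, rfl, ?_⟩
      rw [Ss_zero I (Ecol_e hφ hn 0)]; exact one_mem _
    · rintro p q ⟨a1, a2, a3⟩ ⟨b1, b2, b3⟩
      refine ⟨fun i => I.add_mem (a1 i) (b1 i), by simp [a2, b2], ?_⟩
      rw [Ss_add ⟨a1, Ecol_e hφ hn 0, by simp [a2]⟩ ⟨b1, Ecol_e hφ hn 0, by simp [b2]⟩]
      exact mul_mem a3 b3
    · intro k
      by_cases hk : k = 0
      · subst hk
        rw [hc0, Pi.single_zero]
        refine ⟨fun i => I.zero_mem, rfl, ?_⟩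
        rw [Ss_zero I (Ecol_e hφ hn 0)]; exact one_mem _
      · refine ⟨(SP_sx hφ hn hk (hcI k)).1, by simp [Ne.symm hk], ?_⟩
        rw [← F_eq_S hφ hn hk (hcI k)]
        exact F_mem (FP_sx hφ hn hk (hcI k))
  have := NF_act hφ hn g key.2.2
  rw [act_S hφ hn _ ⟨hcI, Ecol_e hφ hn 0, by simp [hc0]⟩, ← hu, hg'] at this
  exact this

lemma NF_top (I : Ideal R) : NF (n := n) R I = ⊤ := by
  rw [eq_top_iff, ← PresentedGroup.closure_range_of, Subgroup.closure_le]
  rintro _ ⟨⟨u, v, a, b, c⟩ | ⟨u, v, a, b, c⟩, rfl⟩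
  · have := F_mem (I := I) ⟨a, b, c⟩
    rwa [Fs_pos ⟨a, b, c⟩] at this
  · have := S_mem hφ hn (I := I) ⟨a, b, c⟩
    rwa [Ss_pos ⟨a, b, c⟩] at this

lemma star_ext' {I : Ideal R} {G : Type*} [Group G] {A B : StStar n R I →* G}
    (h1 : ∀ u v, FP I u v → A (Fs I u v) = B (Fs I u v)) : A = B := by
  apply MonoidHom.eq_of_eqOn_dense (NF_top hφ hn I)
  rintro _ ⟨u, v, h, rfl⟩
  exact h1 u v h

lemma peiffer {I : Ideal R} {i j : Fin n} (hij : i ≠ j) {s : R} (hs : s ∈ I) (y : StStar n R I) :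
    Fs I (Pi.single i 1) (Pi.single j s) * y * (Fs I (Pi.single i 1) (Pi.single j s))⁻¹ =
      act φ I (sx i j s) y := by
  have : (MulAut.conj (Fs I (Pi.single i 1) (Pi.single j s))).toMonoidHom = act φ I (sx i j s) := by
    apply star_ext' hφ hn
    intro u v h
    rw [act_F hφ hn _ h, ← sx_neg, sx_mulVec hφ hij, vecMul_sx hφ hij]
    have := Fs_conj hφ hn (FP_sx hφ hn hij hs) h
    refine this.trans ?_
    congr 1
    · rw [← Pi.single_smul]; simp
    · rw [← Pi.single_smul, sub_eq_add_neg, ← Pi.single_neg]; simp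
  rw [← this]; rfl
end E
end Stb

namespace Stb
open Matrix
set_option linter.unusedSectionVars false
section G
variable {n : ℕ} [NeZero n] {R : Type} [CommRing R]

lemma exists_map {A B : Type} [CommRing A] [CommRing B] (f : A →+* B) :
    ∃ F : SteinbergGroup n A →* SteinbergGroup n B,
      ∀ i j, i ≠ j → ∀ r, F (sx i j r) = sx i j (f r) := by
  apply exists_hom
  · intro i j _ r s; rw [map_add, sx_add]
  · intro i j h k _ _ hjh hik r s
    exact (sx_comm hjh hik _ _).eq
  · intro i j k hij hjk hik r s
    rw [map_mul]; exact sx_mul hij hjk hik _ _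

lemma st_ext {G : Type*} [Group G] {A B : SteinbergGroup n R →* G}
    (h : ∀ i j, i ≠ j → ∀ r, A (sx i j r) = B (sx i j r)) : A = B := by
  refine MonoidHom.ext fun g => ?_
  refine st_ind (P := fun g => A g = B g) (by simp) ?_ h g
  intro g h hg hh; rw [map_mul, map_mul, hg, hh]

variable {φ : SteinbergGroup n R →* Matrix.GeneralLinearGroup (Fin n) R}

noncomputable def actHom (hφ : Good φ) (hn : 4 ≤ n) (I : Ideal R) :
    SteinbergGroup n R →* MulAut (StStar n R I) where
  toFun g := MonoidHom.toMulEquiv (act φ I g) (act φ I g⁻¹)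
    (by rw [← act_mul hφ hn, inv_mul_cancel, act_one hφ hn])
    (by rw [← act_mul hφ hn, mul_inv_cancel, act_one hφ hn])
  map_one' := by
    ext y; change act φ I 1 y = y; rw [act_one hφ hn]; rfl
  map_mul' g h := by
    ext y; change act φ I (g * h) y = act φ I g (act φ I h y); rw [act_mul hφ hn]; rfl

variable (hφ : Good φ) (hn : 4 ≤ n)
include hφ hn

lemma act_sx {I : Ideal R} {i j h k : Fin n} (hij : i ≠ j) (hhk : h ≠ k) (a : R) {s : R}
    (hs : s ∈ I) : act φ I (sx i j a) (Fs I (Pi.single h 1) (Pi.single k s)) =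
      Fs I (Pi.single h 1 + Pi.single i (a * (Pi.single h 1 : Fin n → R) j))
        (Pi.single k s + Pi.single j ((Pi.single k s : Fin n → R) i * -a)) := by
  rw [act_F hφ hn _ (FP_sx hφ hn hhk hs), ← sx_neg, sx_mulVec hφ hij, vecMul_sx hφ hij]

lemma act_fix {I : Ideal R} {i j h k : Fin n} (hij : i ≠ j) (hhk : h ≠ k) (hjh : j ≠ h)
    (hik : i ≠ k) (a : R) {s : R} (hs : s ∈ I) :
    act φ I (sx i j a) (Fs I (Pi.single h 1) (Pi.single k s)) =
      Fs I (Pi.single h 1) (Pi.single k s) := by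
  rw [act_sx hφ hn hij hhk a hs]; simp [hjh, hik]

lemma X_add {I : Ideal R} {i j : Fin n} (hij : i ≠ j) {s t : R} (hs : s ∈ I) (ht : t ∈ I) :
    Fs I (Pi.single i 1) (Pi.single j s) * Fs I (Pi.single i 1) (Pi.single j t) =
      Fs I (Pi.single i 1) (Pi.single j (s + t)) := by
  rw [Pi.single_add, Fs_add (FP_sx hφ hn hij hs) (FP_sx hφ hn hij ht)]

lemma X_comm {I : Ideal R} {i j h k : Fin n} (hij : i ≠ j) (hhk : h ≠ k) (hjh : j ≠ h)
    (hik : i ≠ k) {s t : R} (hs : s ∈ I) (ht : t ∈ I) :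
    Fs I (Pi.single i 1) (Pi.single j s) * Fs I (Pi.single h 1) (Pi.single k t) =
    Fs I (Pi.single h 1) (Pi.single k t) * Fs I (Pi.single i 1) (Pi.single j s) := by
  rw [← mul_inv_eq_iff_eq_mul, peiffer hφ hn hij hs, act_fix hφ hn hij hhk hjh hik s ht]

/-- `act x_ij(r) X_jk(s) = X_jk(s) X_ik(rs)`. -/
lemma act_l {I : Ideal R} {i j k : Fin n} (hij : i ≠ j) (hjk : j ≠ k) (hik : i ≠ k) (r : R) {s : R}
    (hs : s ∈ I) : act φ I (sx i j r) (Fs I (Pi.single j 1) (Pi.single k s)) =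
      Fs I (Pi.single j 1) (Pi.single k s) * Fs I (Pi.single i 1) (Pi.single k (r * s)) := by
  have hrs : r * s ∈ I := I.mul_mem_left _ hs
  rw [F_eq_S hφ hn hjk hs, act_S hφ hn _ (SP_sx hφ hn hjk hs), F_eq_S hφ hn hik hrs,
    ← Ss_add (SP_sx hφ hn hjk hs) (SP_sx hφ hn hik hrs), ← sx_neg, sx_mulVec hφ hij,
    vecMul_sx hφ hij]
  simp [hik]

/-- `act x_jk(b) X_ij(s) = X_ij(s) X_ik(-sb)`. -/
lemma act_r {I : Ideal R} {i j k : Fin n} (hij : i ≠ j) (hjk : j ≠ k) (hik : i ≠ k) (b : R) {s : R}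
    (hs : s ∈ I) : act φ I (sx j k b) (Fs I (Pi.single i 1) (Pi.single j s)) =
      Fs I (Pi.single i 1) (Pi.single j s) * Fs I (Pi.single i 1) (Pi.single k (s * -b)) := by
  rw [act_sx hφ hn hjk hij b hs,
    ← Fs_add (FP_sx hφ hn hij hs) (FP_sx hφ hn hik (I.mul_mem_right _ hs))]
  simp [hik.symm]

lemma main (I : Ideal R)
    (σ : R ⧸ I →+* R) (hσ : ∀ x, Ideal.Quotient.mk I (σ x) = x)
    (πSt : SteinbergGroup n R →* SteinbergGroup n (R ⧸ I))
    (hπ : ∀ (i j : Fin n) (r : R), πSt (sx i j r) = sx i j (Ideal.Quotient.mk I r))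
    (θ : StStar n R I →* SteinbergGroup n R)
    (hθ : ∀ u v, FP I u v → θ (Fs I u v) = XX φ u v) :
    Function.Injective θ ∧ θ.range = πSt.ker := by
  obtain ⟨σS, hσS⟩ := exists_map (n := n) σ
  let π := Ideal.Quotient.mk I
  have d_mem : ∀ r, r - σ (π r) ∈ I := fun r => by
    rw [← Ideal.Quotient.eq_zero_iff_mem, map_sub, hσ]; simp [π]
  have hd : ∀ r : R, ∃ d ∈ I, d = r - σ (π r) := fun r => ⟨_, d_mem r, rfl⟩
  let α : SteinbergGroup n (R ⧸ I) →* MulAut (StStar n R I) := (actHom hφ hn I).comp σS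
  have hα : ∀ i j, i ≠ j → ∀ (a : R ⧸ I) y, α (sx i j a) y = act φ I (sx i j (σ a)) y := by
    intro i j hij a y
    change act φ I (σS (sx i j a)) y = _
    rw [hσS i j hij]
  obtain ⟨Ψ, hΨ⟩ : ∃ Ψ : SteinbergGroup n R →* StStar n R I ⋊[α] SteinbergGroup n (R ⧸ I),
      ∀ i j, i ≠ j → ∀ r, Ψ (sx i j r) =
        ⟨Fs I (Pi.single i 1) (Pi.single j (r - σ (π r))), sx i j (π r)⟩ := by
    apply exists_hom (f := fun i j r =>
      (⟨Fs I (Pi.single i 1) (Pi.single j (r - σ (π r))), sx i j (π r)⟩ :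
        StStar n R I ⋊[α] SteinbergGroup n (R ⧸ I)))
    · intro i j hij r s
      ext
      · simp only [SemidirectProduct.mul_left]
        rw [hα i j hij, act_fix hφ hn hij hij hij.symm hij _ (d_mem s),
          X_add hφ hn hij (d_mem r) (d_mem s), map_add, map_add]
        congr 2; ring
      · simp only [SemidirectProduct.mul_right]
        rw [← sx_add, map_add]
    · intro i j h k hij hhk hjh hik r s
      ext
      · simp only [SemidirectProduct.mul_left]
        rw [hα i j hij, act_fix hφ hn hij hhk hjh hik _ (d_mem s), hα h k hhk,
          act_fix hφ hn hhk hij hik.symm hjh.symm _ (d_mem r),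
          X_comm hφ hn hij hhk hjh hik (d_mem r) (d_mem s)]
      · simp only [SemidirectProduct.mul_right]
        exact (sx_comm hjh hik _ _).eq
    · intro i j k hij hjk hik r q
      ext
      · simp only [SemidirectProduct.mul_left, SemidirectProduct.mul_right, map_mul,
          MulAut.mul_apply]
        have hab := map_mul σ (π r) (π q)
        have hrq : r * q - σ (π r) * σ (π q) ∈ I := by
          have := d_mem (r * q); rwa [map_mul, hab] at this
        rw [← map_mul π]
        simp only [hα _ _ hij, hα _ _ hjk, hα _ _ hik]
        rw [map_mul π, hab]
        obtain ⟨s, hs, es⟩ := hd r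
        obtain ⟨t, ht, et⟩ := hd q
        rw [← es, ← et]
        generalize σ (π r) = a at *
        generalize σ (π q) = b at *
        have hr : r = s + a := by rw [es]; ring
        have hq : q = t + b := by rw [et]; ring
        have hsb : s * -b ∈ I := I.mul_mem_right _ hs
        rw [act_r hφ hn hij hjk hik b hs, map_mul, act_fix hφ hn hik hjk hjk.symm hik _ ht,
          act_fix hφ hn hik hij hik.symm hij _ hs, act_fix hφ hn hik hik hik.symm hik _ hsb]
        have e1 : Fs I (Pi.single i 1) (Pi.single j s) *
            act φ I (sx i j a) (Fs I (Pi.single j 1) (Pi.single k t)) =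
            act φ I (sx i j r) (Fs I (Pi.single j 1) (Pi.single k t)) *
              Fs I (Pi.single i 1) (Pi.single j s) := by
          rw [← mul_inv_eq_iff_eq_mul, peiffer hφ hn hij hs, hr, sx_add, act_mul hφ hn]; rfl
        have hrt : r * t ∈ I := I.mul_mem_left _ ht
        rw [e1, act_l hφ hn hij hjk hik r ht, X_comm hφ hn hij hik hij.symm hik hs hsb,
          X_comm hφ hn hjk hik hik.symm hjk ht hrt, ← mul_assoc, mul_assoc (Fs I _ _) (Fs I _ _)
            (Fs I _ (Pi.single k (s * -b))), X_comm hφ hn hjk hik hik.symm hjk ht hsb]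
        rw [← mul_assoc (Fs I _ _), X_add hφ hn hik hrq hsb,
          show r * q - a * b + s * -b = r * t by rw [es, et]; ring]
      · simp only [SemidirectProduct.mul_right]
        rw [map_mul]; exact sx_mul hij hjk hik _ _
  have conj : ∀ g y, Ψ g * SemidirectProduct.inl y * (Ψ g)⁻¹ =
      SemidirectProduct.inl (act φ I g y) := by
    intro g
    refine st_ind (P := fun g => ∀ y, Ψ g * SemidirectProduct.inl y * (Ψ g)⁻¹ =
      SemidirectProduct.inl (act φ I g y)) ?_ ?_ ?_ g
    · intro y; rw [act_one hφ hn]; simp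
    · intro g h hg hh y
      rw [act_mul hφ hn, MonoidHom.comp_apply, ← hg, ← hh, map_mul]; group
    · intro i j hij r y
      rw [hΨ i j hij, SemidirectProduct.mk_eq_inl_mul_inr]
      have := SemidirectProduct.inl_aut (φ := α) (sx i j (π r)) y
      rw [hα i j hij] at this
      rw [show sx i j r = sx i j (r - σ (π r)) * sx i j (σ (π r)) by rw [← sx_add]; simp,
        act_mul hφ hn, MonoidHom.comp_apply, ← peiffer hφ hn hij (d_mem r), map_mul, map_mul, this]
      simp only [map_inv]
      group
  have hΨrow : ∀ w : Fin n → R, (∀ i, w i ∈ I) → w 0 = 0 →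
      Ψ (row 0 w) = SemidirectProduct.inl (Fs I (Pi.single 0 1) w) := by
    intro w hw hw0
    refine (vec_ind (P := fun w => (∀ i, w i ∈ I) ∧ w 0 = 0 ∧
      Ψ (row 0 w) = SemidirectProduct.inl (Fs I (Pi.single 0 1) w)) ?_ ?_ w ?_).2.2
    · refine ⟨fun i => I.zero_mem, rfl, ?_⟩
      rw [row_zero, Fs_zero I (Ecol_e hφ hn 0)]; simp
    · rintro p q ⟨a1, a2, a3⟩ ⟨b1, b2, b3⟩
      refine ⟨fun i => I.add_mem (a1 i) (b1 i), by simp [a2, b2], ?_⟩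
      rw [Fs_add ⟨Ecol_e hφ hn 0, a1, by simp [a2]⟩ ⟨Ecol_e hφ hn 0, b1, by simp [b2]⟩, row_add,
        map_mul, a3, b3, map_mul]
    · intro k
      by_cases hk : k = 0
      · subst hk
        rw [hw0, Pi.single_zero]
        refine ⟨fun i => I.zero_mem, rfl, ?_⟩
        rw [row_zero, Fs_zero I (Ecol_e hφ hn 0)]; simp
      · refine ⟨(FP_sx hφ hn (Ne.symm hk) (hw k)).2.1, by simp [Ne.symm hk], ?_⟩
        have : π (w k) = 0 := Ideal.Quotient.eq_zero_iff_mem.mpr (hw k)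
        rw [row_single, hΨ _ _ (Ne.symm hk), this, map_zero, sub_zero, sx_zero]
        rfl
  -- structure of θ on F
  have hθF : ∀ u v, FP I u v → ∃ (g : SteinbergGroup n R) (w : Fin n → R), w 0 = 0 ∧
      (∀ i, w i ∈ I) ∧ u = ma φ g *ᵥ Pi.single 0 1 ∧ v = w ᵥ* ma φ g⁻¹ ∧
      θ (Fs I u v) = g * row 0 w * g⁻¹ := by
    intro u v h
    obtain ⟨g, rfl⟩ := (Ecol_iff hφ _).mp h.1
    refine ⟨g, v ᵥ* ma φ g, orth_e h.2.2, mem_vecMul _ h.2.1, rfl, ?_, ?_⟩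
    · rw [vecMul_vecMul, ma_inv, vecMul_one]
    · rw [hθ _ _ h, XX_spec hφ hn g 0 _ (orth_e h.2.2)]
  have hΨθ : Ψ.comp θ = SemidirectProduct.inl := by
    apply star_ext' hφ hn
    intro u v h
    obtain ⟨g, w, hw0, hw, hu, hv, e⟩ := hθF u v h
    rw [MonoidHom.comp_apply, e, map_mul, map_mul, map_inv, hΨrow w hw hw0, conj,
      act_F hφ hn _ ⟨Ecol_e hφ hn 0, hw, by simp [hw0]⟩, ← hu, ← hv]
  have hinj : Function.Injective θ := by
    have : Function.Injective (Ψ.comp θ) := by rw [hΨθ]; exact SemidirectProduct.inl_injective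
    exact Function.Injective.of_comp this
  refine ⟨hinj, le_antisymm ?_ ?_⟩
  · rintro _ ⟨y, rfl⟩
    have : πSt.comp θ = 1 := by
      apply star_ext' hφ hn
      intro u v h
      obtain ⟨g, w, hw0, hw, hu, hv, e⟩ := hθF u v h
      have : πSt (row 0 w) = 1 := by
        refine vec_ind (P := fun w => πSt (row 0 w) = 1) (by simp [row_zero]) ?_ w ?_
        · intro p q hp hq; rw [row_add, map_mul, hp, hq, one_mul]
        · intro k
          rw [row_single, hπ, Ideal.Quotient.eq_zero_iff_mem.mpr (hw k), sx_zero]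
      rw [MonoidHom.comp_apply, e, map_mul, map_mul, this, map_inv]; simp
    exact DFunLike.congr_fun this y
  · intro x hx
    have hθact : ∀ g y, θ (act φ I g y) = g * θ y * g⁻¹ := by
      intro g y
      have : θ.comp (act φ I g) = (MulAut.conj g).toMonoidHom.comp θ := by
        apply star_ext' hφ hn
        intro u v h
        rw [MonoidHom.comp_apply, MonoidHom.comp_apply, act_F hφ hn _ h, hθ _ _ (FP_act hφ g h),
          hθ _ _ h, ← XX_equiv hφ hn ((Ecol_iff hφ _).mp h.1) h.2.2]; rfl
      exact DFunLike.congr_fun this y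
    let T : StStar n R I ⋊[α] SteinbergGroup n (R ⧸ I) →* SteinbergGroup n R :=
      SemidirectProduct.lift θ σS (by
        intro h; refine MonoidHom.ext fun y => ?_
        change θ (act φ I (σS h) y) = σS h * θ y * (σS h)⁻¹
        exact hθact _ _)
    have hT : T.comp Ψ = MonoidHom.id _ := by
      apply st_ext
      intro i j hij r
      rw [MonoidHom.comp_apply, hΨ i j hij, SemidirectProduct.mk_eq_inl_mul_inr, map_mul]
      simp only [T, SemidirectProduct.lift_inl, SemidirectProduct.lift_inr]
      rw [hθ _ _ (FP_sx hφ hn hij (d_mem r)), XX_e hφ hn _ _ (by simp [hij]), row_single,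
        hσS i j hij, ← sx_add]
      simp
    have hR : SemidirectProduct.rightHom.comp Ψ = πSt := by
      apply st_ext
      intro i j hij r
      rw [MonoidHom.comp_apply, hΨ i j hij, hπ]; rfl
    have hx1 : (Ψ x).right = 1 := by
      have := DFunLike.congr_fun hR x
      rw [MonoidHom.mem_ker.mp hx] at this
      exact this
    refine ⟨(Ψ x).left, ?_⟩
    have h2 := DFunLike.congr_fun hT x
    rw [MonoidHom.comp_apply, ← SemidirectProduct.inl_left_mul_inr_right (Ψ x), hx1, map_one,
      mul_one] at h2
    simpa [T] using h2
end G
end Stb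

theorem stmt14 (n : ℕ) (hn : 4 ≤ n) [NeZero n] (R : Type) [CommRing R] (I : Ideal R)
    (σ : R ⧸ I →+* R) (hσ : ∀ x, Ideal.Quotient.mk I (σ x) = x)
    (πSt : SteinbergGroup n R →* SteinbergGroup n (R ⧸ I))
    (hπ : ∀ (i j : Fin n) (hij : i ≠ j) (r : R),
      πSt (stx n R i j hij r) = stx n (R ⧸ I) i j hij (Ideal.Quotient.mk I r))
    (φ : SteinbergGroup n R →* Matrix.GeneralLinearGroup (Fin n) R)
    (hφ : ∀ (i j : Fin n) (hij : i ≠ j) (r : R),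
      (φ (stx n R i j hij r) : Matrix (Fin n) (Fin n) R) = 1 + Matrix.single i j r) :
    ∃ Θ : StStar n R I ≃* πSt.ker,
      (∀ (u v : Fin n → R) (hu : u ∈ Ecol n R) (hv : ∀ i, v i ∈ I)
        (ho : dotProduct u v = 0),
        (φ ((Θ (PresentedGroup.of (StarGen.F u v hu hv ho)) : πSt.ker) :
            SteinbergGroup n R) : Matrix (Fin n) (Fin n) R) = tMat u v) ∧
      (∀ (u v : Fin n → R) (hu : ∀ i, u i ∈ I) (hv : v ∈ Ecol n R)
        (ho : dotProduct u v = 0),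
        (φ ((Θ (PresentedGroup.of (StarGen.S u v hu hv ho)) : πSt.ker) :
            SteinbergGroup n R) : Matrix (Fin n) (Fin n) R) = tMat u v) ∧
      (∀ (i j : Fin n) (hij : i ≠ j) (s : R) (_ : s ∈ I)
        (hu : (Pi.single i 1 : Fin n → R) ∈ Ecol n R)
        (hv : ∀ k, (Pi.single j s : Fin n → R) k ∈ I)
        (ho : dotProduct (Pi.single i 1 : Fin n → R) (Pi.single j s) = 0),
        ((Θ (PresentedGroup.of (StarGen.F (Pi.single i 1) (Pi.single j s) hu hv ho)) :
            πSt.ker) : SteinbergGroup n R) = stx n R i j hij s) := by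
  have hg : Stb.Good φ := hφ
  obtain ⟨θ, hF, hS⟩ := Stb.exists_theta hg hn I
  have hπ' : ∀ (i j : Fin n) (r : R),
      πSt (Stb.sx i j r) = Stb.sx i j (Ideal.Quotient.mk I r) := by
    intro i j r
    by_cases h : i = j
    · subst h; rw [Stb.sx_self, Stb.sx_self, map_one]
    · rw [Stb.sx_ne h, Stb.sx_ne h, hπ]
  obtain ⟨hinj, hr⟩ := Stb.main hg hn I σ hσ πSt hπ' θ hF
  have hmem : ∀ y, θ y ∈ πSt.ker := fun y => by rw [← hr]; exact ⟨y, rfl⟩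
  obtain ⟨Θ, hΘ⟩ : ∃ Θ : StStar n R I ≃* πSt.ker, ∀ y, (Θ y : SteinbergGroup n R) = θ y := by
    have hb : Function.Bijective (θ.codRestrict πSt.ker hmem) := by
      constructor
      · intro x y h
        exact hinj (congrArg Subtype.val h)
      · rintro ⟨x, hx⟩
        have hx' := hx
        rw [← hr] at hx'
        obtain ⟨y, rfl⟩ := hx'
        exact ⟨y, rfl⟩
    exact ⟨MulEquiv.ofBijective _ hb, fun y => rfl⟩
  refine ⟨Θ, ?_, ?_, ?_⟩
  · intro u v hu hv ho
    have h := hF u v ⟨hu, hv, ho⟩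
    rw [Stb.Fs_pos ⟨hu, hv, ho⟩] at h
    rw [hΘ, h]
    exact Stb.ma_XX hg hn ((Stb.Ecol_iff hg _).mp hu) ho
  · intro u v hu hv ho
    have h := hS u v ⟨hu, hv, ho⟩
    have hv' := (Stb.Ecol_iff hg _).mp hv
    have ho' : dotProduct v u = 0 := by rw [dotProduct_comm, ho]
    rw [Stb.Ss_pos ⟨hu, hv, ho⟩] at h
    rw [hΘ, h]
    change Stb.ma φ _ = _
    rw [Stb.ma_tau hg, Stb.XX_neg hg hn hv' ho', inv_inv, Stb.ma_XX hg hn hv' ho', tMat, tMat,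
      Matrix.transpose_add, Matrix.transpose_one, Matrix.transpose_vecMulVec]
  · intro i j hij s hs hu hv ho
    have h := hF _ _ ⟨hu, hv, ho⟩
    rw [Stb.Fs_pos ⟨hu, hv, ho⟩] at h
    rw [hΘ, h, Stb.XX_e hg hn _ _ (by simp [hij]), Stb.row_single,
      Stb.sx_ne hij]
end

section
/- Let B be a commutative ring, n ≥ 4, and u, v ∈ Bⁿ with uᵗv = 0. Let I(u) denote the ideal of B generated by the coordinates of u, and let D(u) denote the set of vectors x ∈ Bⁿ that can be written as a finite sum x = Σ_k x_k where each x_k ∈ Bⁿ satisfies uᵗx_k = 0 and has at least two zero coordinates. Then for every b ∈ I(u), the vector v·b belongs to D(u). -/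
/-- The set `D(u)` of vectors decomposing as sums of vectors orthogonal to `u`
with at least two zero coordinates. -/
def Dset {n : ℕ} {B : Type} [CommRing B] (u : Fin n → B) : Set (Fin n → B) :=
  {x | ∃ (N : ℕ) (f : Fin N → (Fin n → B)),
    x = ∑ k, f k ∧
      ∀ k, dotProduct u (f k) = 0 ∧ ∃ p q : Fin n, p ≠ q ∧ f k p = 0 ∧ f k q = 0}

theorem Dset_zero {n : ℕ} {B : Type} [CommRing B] (u : Fin n → B) : (0 : Fin n → B) ∈ Dset u :=
  ⟨0, fun _ => 0, by simp, fun k => k.elim0⟩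

theorem Dset_add {n : ℕ} {B : Type} [CommRing B] (u x y : Fin n → B)
    (hx : x ∈ Dset u) (hy : y ∈ Dset u) : x + y ∈ Dset u := by
  obtain ⟨N, f, rfl, hf⟩ := hx
  obtain ⟨M, g, rfl, hg⟩ := hy
  refine ⟨N + M, Fin.append f g, by simp [Fin.sum_univ_add], fun k => ?_⟩
  refine Fin.addCases (fun i => ?_) (fun i => ?_) k
  · simpa using hf i
  · simpa using hg i

theorem Dset_smul {n : ℕ} {B : Type} [CommRing B] (u x : Fin n → B) (c : B)
    (hx : x ∈ Dset u) : c • x ∈ Dset u := by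
  obtain ⟨N, f, rfl, hf⟩ := hx
  refine ⟨N, fun k => c • f k, Finset.smul_sum, fun k => ?_⟩
  obtain ⟨h1, p, q, hpq, hp, hq⟩ := hf k
  exact ⟨by simp [h1], p, q, hpq, by simp [hp], by simp [hq]⟩

theorem Dset_koszul {n : ℕ} {B : Type} [CommRing B] (hn : 4 ≤ n) (u v : Fin n → B)
    (h : dotProduct u v = 0) (k : Fin n) : u k • v ∈ Dset u := by
  refine ⟨n, fun j => v j • (u k • Pi.single j (1 : B) - u j • Pi.single k (1 : B)), ?_,
    fun j => ⟨?_, ?_⟩⟩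
  · have h2 : ∑ j, v j * u j = 0 := by
      rw [← h]; simp [dotProduct, mul_comm]
    ext i
    simp only [Finset.sum_apply, Pi.smul_apply, Pi.sub_apply, smul_eq_mul, mul_sub,
      Finset.sum_sub_distrib, ← mul_assoc, ← Finset.sum_mul, h2]
    simp [Pi.single_apply, mul_comm]
  · simp [dotProduct_sub, dotProduct_smul, mul_comm]
  · have hc : 1 < (({j, k} : Finset (Fin n))ᶜ).card := by
      rw [Finset.card_compl, Fintype.card_fin]
      have := Finset.card_le_two (a := j) (b := k)
      omega
    obtain ⟨p, hp, q, hq, hpq⟩ := Finset.one_lt_card.mp hc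
    simp only [Finset.mem_compl, Finset.mem_insert, Finset.mem_singleton, not_or] at hp hq
    exact ⟨p, q, hpq, by simp [hp.1, hp.2], by simp [hq.1, hq.2]⟩

theorem stmt16 (B : Type) [CommRing B] (n : ℕ) (hn : 4 ≤ n) (u v : Fin n → B)
    (h : dotProduct u v = 0) (b : B) (hb : b ∈ Ideal.span (Set.range u)) :
    b • v ∈ Dset u := by
  rw [Ideal.span] at hb
  induction hb using Submodule.span_induction with
  | mem x hx =>
    obtain ⟨k, rfl⟩ := hx
    exact Dset_koszul hn u v h k
  | zero => rw [zero_smul]; exact Dset_zero u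
  | add x y _ _ hx hy => rw [add_smul]; exact Dset_add u _ _ hx hy
  | smul a x _ hx => rw [smul_assoc]; exact Dset_smul u _ a hx
end

section
/- Let B be a commutative ring, a ∈ B, and let I be an ideal of B that is uniquely a-divisible, i.e., for every m ∈ I there is a unique m′ ∈ I with a·m′ = m. Let n ≥ 4 and u ∈ Bⁿ be such that a^k ∈ I(u) for some k ≥ 0. Then every v ∈ Iⁿ with uᵗv = 0 belongs to D(u). -/
theorem aux_div (B : Type) [CommRing B] (a : B) (I : Ideal B)
    (hdiv : ∀ m ∈ I, ∃! m' : B, m' ∈ I ∧ a * m' = m)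
    (n : ℕ) (u : Fin n → B) (k : ℕ)
    (v : Fin n → B) (hv : ∀ i, v i ∈ I) (ho : dotProduct u v = 0) :
    ∃ w : Fin n → B, (∀ i, w i ∈ I) ∧ dotProduct u w = 0 ∧ ∀ i, v i = a ^ k * w i := by
  induction k with
  | zero => exact ⟨v, hv, ho, by simp⟩
  | succ k ih =>
    obtain ⟨w, hw, hw0, h⟩ := ih
    choose x hx _ using fun i => hdiv (w i) (hw i)
    refine ⟨x, fun i => (hx i).1, ?_, fun i => ?_⟩
    · have h1 : dotProduct u x ∈ I := by
        unfold dotProduct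
        exact I.sum_mem fun i _ => I.mul_mem_left _ (hx i).1
      have h2 : a * dotProduct u x = 0 := by
        rw [← hw0]
        unfold dotProduct
        rw [Finset.mul_sum]
        refine Finset.sum_congr rfl fun i _ => ?_
        rw [← (hx i).2]; ring
      exact (hdiv 0 I.zero_mem).unique ⟨h1, h2⟩ ⟨I.zero_mem, by simp⟩
    · rw [h i, ← (hx i).2]; ring

theorem stmt17 (B : Type) [CommRing B] (a : B) (I : Ideal B)
    (hdiv : ∀ m ∈ I, ∃! m' : B, m' ∈ I ∧ a * m' = m)
    (n : ℕ) (hn : 4 ≤ n) (u : Fin n → B) (k : ℕ)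
    (hk : a ^ k ∈ Ideal.span (Set.range u))
    (v : Fin n → B) (hv : ∀ i, v i ∈ I) (ho : dotProduct u v = 0) :
    v ∈ Dset u := by
  obtain ⟨w, -, hw0, hvw⟩ := aux_div B a I hdiv n u k v hv ho
  obtain ⟨c, hc⟩ := (Ideal.mem_span_range_iff_exists_fun).1 hk
  let g : Fin n × Fin n → (Fin n → B) := fun p =>
    (Pi.single p.2 (c p.1 * w p.2 * u p.1) : Fin n → B)
      - (Pi.single p.1 (c p.1 * w p.2 * u p.2) : Fin n → B)
  let e := (Fintype.equivFin (Fin n × Fin n)).symm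
  refine ⟨_, fun t => g (e t), ?_, fun t => ?_⟩
  · rw [Equiv.sum_comp e g, Fintype.sum_prod_type]
    funext l
    have h1 : ∑ i, ∑ j, (Pi.single j (c i * w j * u i) : Fin n → B) l = v l := by
      simp only [Pi.single_apply, Finset.sum_ite_eq, Finset.mem_univ, if_true]
      rw [hvw l, ← hc, Finset.sum_mul]
      exact Finset.sum_congr rfl fun i _ => by ring
    have h2 : ∑ i, ∑ j, (Pi.single i (c i * w j * u j) : Fin n → B) l = 0 := by
      rw [Finset.sum_comm]
      simp only [Pi.single_apply, Finset.sum_ite_eq, Finset.mem_univ, if_true]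
      have : c l * dotProduct u w = 0 := by rw [hw0, mul_zero]
      rw [← this, dotProduct, Finset.mul_sum]
      exact Finset.sum_congr rfl fun i _ => by ring
    simp only [g, Finset.sum_apply, Pi.sub_apply, Finset.sum_sub_distrib, h1, h2, sub_zero]
  · show dotProduct u (g (e t)) = 0 ∧ ∃ p q : Fin n, p ≠ q ∧ g (e t) p = 0 ∧ g (e t) q = 0
    generalize e t = p
    obtain ⟨i, j⟩ := p
    constructor
    · simp only [g, dotProduct_sub, dotProduct_single]
      ring
    · have hcard : 1 < (Finset.univ \ {i, j} : Finset (Fin n)).card := by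
        have h1 := Finset.le_card_sdiff ({i, j} : Finset (Fin n)) Finset.univ
        have h2 := Finset.card_le_two (a := i) (b := j)
        rw [Finset.card_univ, Fintype.card_fin] at h1
        omega
      obtain ⟨p, hp, q, hq, hpq⟩ := Finset.one_lt_card.1 hcard
      simp only [Finset.mem_sdiff, Finset.mem_univ, true_and, Finset.mem_insert,
        Finset.mem_singleton, not_or] at hp hq
      exact ⟨p, q, hpq, by simp [g, hp.1, hp.2, Pi.single_apply],
        by simp [g, hq.1, hq.2, Pi.single_apply]⟩
end
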